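/- arXiv:math/0211058 — 10 statements merged into one kernel-verified Lean document; each statement's English description precedes it below -/
import Mathlib

section
/- Under these hypotheses, the A-modules A^∨ = Hom_k(A,k) and J are both free of rank one, and the map θ0 : A^∨ → Hom_A(J, A), sending φ to the restriction to J of the map 1⊗φ : A ⊗[k] A → A given by a⊗b ↦ φ(b)·a (this restriction is A-linear and takes values in A ≅ A⊗k), is an A-linear isomorphism. -/
open TensorProduct

noncomputable section

variable (k A : Type*) [CommRing k] [CommRing A] [Algebra k A]

/-- `I`, the kernel of the multiplication map `μ : A ⊗[k] A → A`, as an ideal of `A ⊗[k] A`. -/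
def Imul : Ideal (A ⊗[k] A) := RingHom.ker (Algebra.TensorProduct.lmul' k (S := A))

/-- `J = Ann_{A ⊗[k] A}(I)`, the annihilator of `I`.  Via the instance
`Algebra A (A ⊗[k] A)` given by `a ↦ a ⊗ 1`, the ideal `J` is an `A`-module. -/
def Jann : Ideal (A ⊗[k] A) := Submodule.annihilator (Imul k A)

/-- The `k`-linear map `1 ⊗ φ : A ⊗[k] A → A`, `a ⊗ b ↦ φ(b)·a`. -/
def oneTensorMap (φ : Module.Dual k A) : A ⊗[k] A →ₗ[k] A :=
  TensorProduct.lift (LinearMap.flip ((LinearMap.lsmul k A).comp φ))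

/-- The `A`-module structure on `A^∨ = Hom_k(A,k)` given by `(a·φ)(b) = φ(ab)`. -/
instance dualSMul : SMul A (Module.Dual k A) :=
  ⟨fun a φ => φ.comp (LinearMap.mulLeft k a)⟩

theorem dual_smul_apply (a : A) (φ : Module.Dual k A) (b : A) : (a • φ) b = φ (a * b) := rfl

instance dualModule : Module A (Module.Dual k A) where
  one_smul φ := LinearMap.ext fun b => by rw [dual_smul_apply, one_mul]
  mul_smul a a' φ := LinearMap.ext fun b => by
    rw [dual_smul_apply, dual_smul_apply, dual_smul_apply]; congr 1; ring
  smul_zero a := LinearMap.ext fun b => by rw [dual_smul_apply]; rfl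
  smul_add a φ ψ := LinearMap.ext fun b => by
    simp only [LinearMap.add_apply, dual_smul_apply]
  add_smul a a' φ := LinearMap.ext fun b => by
    simp only [LinearMap.add_apply, dual_smul_apply, add_mul, map_add]
  zero_smul φ := LinearMap.ext fun b => by
    rw [dual_smul_apply, zero_mul, map_zero]; rfl

/-!
Let `δ` generate `I` and write `M = A ⊗[k] A`.  The sequence of `A`-modules
`0 → J → M --δ--> M --μ--> A → 0` is exact, and it splits at every place because `M` and `A` are
projective.

* `J` is free: `M` acts on `J` through `μ`, so a generator of the ideal `J` gives a surjection
  `A → J`.  Adding the identity of `I` turns it into a surjection `M ≃ I × A → I × J ≃ M`, which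
  is injective by Orzech's theorem.
* `θ0` is surjective: an `A`-linear form on `J` extends to `M`, the forms on `M` are `A`-linear
  combinations of the `1 ⊗ φ`, and on `J` the coefficients can be moved into `φ`.
* `θ0` is injective: as `J ≃ A`, it is now a `k`-linear surjection `A^∨ → A`.  The dual of a
  section of it is a surjection `A → A^∨`, and the composite `A → A^∨ → A` is injective, again by
  Orzech's theorem.
-/

section Exact

open Function

variable {R K M P N : Type*} [Ring R] [AddCommGroup K] [AddCommGroup M] [AddCommGroup P]
  [AddCommGroup N] [Module R K] [Module R M] [Module R P] [Module R N]

lemma exists_retraction_of_exact_of_projective {i : K →ₗ[R] M} {p : M →ₗ[R] N}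
    [Module.Projective R N] (hi : Injective i) (hip : Exact i p) (hp : Surjective p) :
    ∃ q : M →ₗ[R] K, q ∘ₗ i = .id := by
  have section_iff_retraction := hip.split_tfae'.out 0 1
  exact (section_iff_retraction.mp ⟨hi, Module.projective_lifting_property p .id hp⟩).2

lemma nonempty_linearEquiv_prod_of_exact_of_projective {i : K →ₗ[R] M} {p : M →ₗ[R] N}
    [Module.Projective R N] (hi : Injective i) (hip : Exact i p) (hp : Surjective p) :
    Nonempty (M ≃ₗ[R] K × N) :=
  have ⟨s, hs⟩ := Module.projective_lifting_property p .id hp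
  ⟨(hip.splitSurjectiveEquiv hi ⟨s, hs⟩).1⟩

lemma exact_subtype_range {d : M →ₗ[R] P} {p : P →ₗ[R] N} (hdp : Exact d p) :
    Exact (LinearMap.range d).subtype p := by
  rw [LinearMap.exact_iff, Submodule.range_subtype, hdp.linearMap_ker_eq]

lemma exact_rangeRestrict {i : K →ₗ[R] M} {d : M →ₗ[R] P} (hid : Exact i d) :
    Exact i d.rangeRestrict := by
  rw [LinearMap.exact_iff, LinearMap.ker_rangeRestrict, hid.linearMap_ker_eq]

lemma projective_range_of_exact {d : M →ₗ[R] P} {p : P →ₗ[R] N} [Module.Projective R P]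
    [Module.Projective R N] (hdp : Exact d p) (hp : Surjective p) :
    Module.Projective R (LinearMap.range d) :=
  have ⟨q, hq⟩ := exists_retraction_of_exact_of_projective
    (LinearMap.range d).injective_subtype (exact_subtype_range hdp) hp
  .of_split _ q hq

lemma exists_retraction_of_exact_of_exact {i : K →ₗ[R] M} {d : M →ₗ[R] P} {p : P →ₗ[R] N}
    [Module.Projective R P] [Module.Projective R N] (hi : Injective i) (hid : Exact i d)
    (hdp : Exact d p) (hp : Surjective p) : ∃ q : M →ₗ[R] K, q ∘ₗ i = .id :=
  have := projective_range_of_exact hdp hp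
  exists_retraction_of_exact_of_projective hi (exact_rangeRestrict hid) d.surjective_rangeRestrict

variable [OrzechProperty R]

lemma injective_of_surjective_of_linearEquiv_prod [Module.Finite R M] (e₁ : M ≃ₗ[R] P × N)
    (e₂ : M ≃ₗ[R] P × K) (f : N →ₗ[R] K) (hf : Surjective f) : Injective f := by
  let g : M →ₗ[R] M := e₂.symm.toLinearMap ∘ₗ LinearMap.id.prodMap f ∘ₗ e₁.toLinearMap
  have hg : Surjective g := by
    simpa [g, LinearMap.coe_prodMap, Prod.map_surjective, surjective_id] using hf
  have hg' : Injective g := OrzechProperty.injective_of_surjective_endomorphism g hg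
  simpa [g, LinearMap.coe_prodMap, Prod.map_injective, injective_id] using hg'

lemma injective_of_surjective_of_exact_of_exact [Module.Finite R M] [Module.Projective R M]
    [Module.Projective R N] {i : K →ₗ[R] M} {d : M →ₗ[R] M} {p : M →ₗ[R] N} (hi : Injective i)
    (hid : Exact i d) (hdp : Exact d p) (hp : Surjective p) (f : N →ₗ[R] K)
    (hf : Surjective f) : Injective f := by
  have := projective_range_of_exact hdp hp
  obtain ⟨e₁⟩ := nonempty_linearEquiv_prod_of_exact_of_projective
    (LinearMap.range d).injective_subtype (exact_subtype_range hdp) hp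
  obtain ⟨e₂⟩ := nonempty_linearEquiv_prod_of_exact_of_projective hi (exact_rangeRestrict hid)
    d.surjective_rangeRestrict
  exact injective_of_surjective_of_linearEquiv_prod e₁ (e₂ ≪≫ₗ .prodComm R _ _) f hf

end Exact

section Dual

variable {R M : Type*} [CommRing R] [AddCommGroup M] [Module R M] [Module.Finite R M]
  [Module.Projective R M]

lemma injective_of_surjective_dual (f : Module.Dual R M →ₗ[R] M) (hf : Function.Surjective f) :
    Function.Injective f := by
  obtain ⟨s, hs⟩ := Module.projective_lifting_property f .id hf
  let t : M →ₗ[R] Module.Dual R M := s.dualMap ∘ₗ Module.Dual.eval R M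
  have ht : Function.Surjective t := by
    have hs' : Function.Surjective s.dualMap :=
      LinearMap.surjective_of_comp_eq_id f.dualMap s.dualMap (congrArg LinearMap.dualMap hs)
    exact hs'.comp (Module.bijective_dual_eval R M).surjective
  have hft : Function.Injective (f ∘ₗ t) :=
    OrzechProperty.injective_of_surjective_endomorphism _ (hf.comp ht)
  exact .of_comp_right hft ht

lemma span_range_dual_baseChange (B : Type*) [CommRing B] [Algebra R B] :
    Submodule.span B (Set.range (Module.Dual.baseChange (R := R) (V := M) B)) = ⊤ := by
  refine Submodule.eq_top_iff'.mpr fun F => ?_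
  obtain ⟨g, rfl⟩ := (LinearMap.liftBaseChangeEquiv B).surjective F
  obtain ⟨t, rfl⟩ := dualTensorHom_bijective.surjective g
  induction t using TensorProduct.induction_on with
  | zero => simp
  | add t u ht hu => simpa only [map_add] using add_mem ht hu
  | tmul φ b =>
    have h : LinearMap.liftBaseChangeEquiv B (dualTensorHom R M B (φ ⊗ₜ b)) =
        b • φ.baseChange B := by
      ext m
      simp [mul_comm]
    exact h ▸ Submodule.smul_mem _ b (Submodule.subset_span ⟨φ, rfl⟩)

end Dual

section PrincipalIdeal

variable {R S T : Type*} [CommRing R] [CommRing S] [CommRing T] [Algebra R S] [Algebra R T]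

lemma exact_annihilator_subtype_mulLeft {I : Ideal S} {δ : S} (hδ : I = Ideal.span {δ}) :
    Function.Exact (I.annihilator.subtype.restrictScalars R) (LinearMap.mulLeft R δ) := by
  intro x
  simp [hδ, Ideal.span, mul_comm]

lemma exact_mulLeft_algHom {g : S →ₐ[R] T} {δ : S} (hδ : RingHom.ker g = Ideal.span {δ}) :
    Function.Exact (LinearMap.mulLeft R δ) g.toLinearMap := by
  intro x
  rw [AlgHom.toLinearMap_apply, ← RingHom.mem_ker, hδ, Ideal.mem_span_singleton]
  exact exists_congr fun _ => eq_comm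

end PrincipalIdeal

section Theta

variable {k A}

open Algebra.TensorProduct (lmul'')

lemma lmul''_tmul (a b : A) : lmul'' k (a ⊗ₜ[k] b) = a * b := rfl

lemma lmul''_surjective : Function.Surjective (lmul'' k (S := A)) :=
  fun a => ⟨a ⊗ₜ 1, by rw [lmul''_tmul, mul_one]⟩

lemma mul_eq_lmul_smul_of_mem_Jann {x : A ⊗[k] A} (hx : x ∈ Jann k A) (w : A ⊗[k] A) :
    w * x = lmul'' k w • x := by
  have hw : w - lmul'' k w ⊗ₜ[k] (1 : A) ∈ Imul k A := by
    change lmul'' k _ = 0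
    rw [map_sub, lmul''_tmul, mul_one, sub_self]
  have h := Submodule.mem_annihilator.mp hx _ hw
  rw [smul_eq_mul, mul_comm, sub_mul, sub_eq_zero] at h
  rw [h, Algebra.smul_def]
  rfl

lemma exists_surjective_Jann (hJ : (Jann k A).IsPrincipal) :
    ∃ f : A →ₗ[A] Jann k A, Function.Surjective f := by
  obtain ⟨ε, hε⟩ := hJ
  have hεJ : ε ∈ Jann k A := hε ▸ Submodule.mem_span_singleton_self ε
  refine ⟨LinearMap.toSpanSingleton A _ ⟨ε, hεJ⟩, fun ⟨x, hx⟩ => ?_⟩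
  obtain ⟨w, rfl⟩ := Submodule.mem_span_singleton.mp (hε ▸ hx)
  exact ⟨lmul'' k w, Subtype.ext (mul_eq_lmul_smul_of_mem_Jann hεJ w).symm⟩

lemma nonempty_Jann_linearEquiv [Module.Finite k A] [Module.Projective k A]
    (hI : (Imul k A).IsPrincipal) (hJ : (Jann k A).IsPrincipal) :
    Nonempty (Jann k A ≃ₗ[A] A) := by
  obtain ⟨δ, hδ⟩ := hI
  obtain ⟨f, hf⟩ := exists_surjective_Jann hJ
  have hf' : Function.Injective f := injective_of_surjective_of_exact_of_exact
    Subtype.val_injective (exact_annihilator_subtype_mulLeft hδ)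
    (exact_mulLeft_algHom (g := lmul'' k) hδ) lmul''_surjective f hf
  exact ⟨(LinearEquiv.ofBijective f ⟨hf', hf⟩).symm⟩

lemma exists_retraction_Jann [Module.Projective k A] (hI : (Imul k A).IsPrincipal) :
    ∃ q : A ⊗[k] A →ₗ[A] Jann k A, q ∘ₗ (Jann k A).subtype.restrictScalars A = .id :=
  have ⟨_, hδ⟩ := hI
  exists_retraction_of_exact_of_exact Subtype.val_injective
    (exact_annihilator_subtype_mulLeft hδ)
    (exact_mulLeft_algHom (g := lmul'' k) hδ) lmul''_surjective

lemma oneTensorMap_eq_baseChange (φ : Module.Dual k A) (z : A ⊗[k] A) :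
    oneTensorMap k A φ z = φ.baseChange A z := by
  induction z using TensorProduct.induction_on with
  | zero => simp
  | tmul a b => simp [oneTensorMap]
  | add x y hx hy => rw [map_add, map_add, hx, hy]

lemma baseChange_dual_smul (φ : Module.Dual k A) (a : A) (z : A ⊗[k] A) :
    (a • φ).baseChange A z = φ.baseChange A ((1 ⊗ₜ[k] a) * z) := by
  induction z using TensorProduct.induction_on with
  | zero => simp
  | tmul x y => simp [dual_smul_apply]
  | add x y hx hy => rw [mul_add, map_add, map_add, hx, hy]

/-- The map `θ0 : A^∨ → Hom_A(J, A)`, `φ ↦ (1 ⊗ φ)|_J`, with `1 ⊗ φ` encoded as the base change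
of the linear form `φ` along `k → A`. -/
def thetaZero : Module.Dual k A →ₗ[A] (Jann k A →ₗ[A] A) where
  toFun φ := φ.baseChange A ∘ₗ (Jann k A).subtype.restrictScalars A
  map_add' φ ψ := by rw [map_add, LinearMap.add_comp]
  map_smul' a φ := LinearMap.ext fun x => by
    change (a • φ).baseChange A (x : A ⊗[k] A) = a • φ.baseChange A (x : A ⊗[k] A)
    rw [baseChange_dual_smul, mul_eq_lmul_smul_of_mem_Jann x.2, map_smul, lmul''_tmul, one_mul]

lemma thetaZero_surjective [Module.Finite k A] [Module.Projective k A]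
    (hI : (Imul k A).IsPrincipal) : Function.Surjective (thetaZero (k := k) (A := A)) := by
  obtain ⟨q, hq⟩ := exists_retraction_Jann hI
  let restrict := ((Jann k A).subtype.restrictScalars A).dualMap
  have hrestrict (f : Jann k A →ₗ[A] A) : restrict (f ∘ₗ q) = f := by
    rw [LinearMap.dualMap_apply', LinearMap.comp_assoc, hq, LinearMap.comp_id]
  have hrange : Submodule.map restrict ⊤ ≤ LinearMap.range thetaZero := by
    rw [← span_range_dual_baseChange (R := k), Submodule.map_span_le]
    rintro _ ⟨φ, rfl⟩
    exact ⟨φ, rfl⟩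
  exact fun f => hrange ⟨f ∘ₗ q, trivial, hrestrict f⟩

instance : IsScalarTower k A (Module.Dual k A) where
  smul_assoc c a φ := LinearMap.ext fun b => by
    simp only [dual_smul_apply, smul_mul_assoc, map_smul, LinearMap.smul_apply]

lemma thetaZero_bijective [Module.Finite k A] [Module.Projective k A]
    (hI : (Imul k A).IsPrincipal) (hJ : (Jann k A).IsPrincipal) :
    Function.Bijective (thetaZero (k := k) (A := A)) := by
  obtain ⟨j⟩ := nonempty_Jann_linearEquiv hI hJ
  let e : (Jann k A →ₗ[A] A) ≃ₗ[A] A := Module.Dual.congr j ≪≫ₗ LinearMap.ringLmapEquivSelf A A A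
  have hsurj := thetaZero_surjective hI
  have hinj : Function.Injective (e ∘ thetaZero) := injective_of_surjective_dual
    ((e.toLinearMap ∘ₗ thetaZero).restrictScalars k) (e.surjective.comp hsurj)
  exact ⟨.of_comp hinj, hsurj⟩

end Theta

theorem stmt0_general [Module.Finite k A] [Module.Projective k A]
    (hI : (Imul k A).IsPrincipal) (hJ : (Jann k A).IsPrincipal) :
    Nonempty (Module.Dual k A ≃ₗ[A] A) ∧
      Nonempty (↥(Jann k A) ≃ₗ[A] A) ∧
      ∃ Θ : Module.Dual k A ≃ₗ[A] (↥(Jann k A) →ₗ[A] A),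
        ∀ (φ : Module.Dual k A) (x : ↥(Jann k A)),
          Θ φ x = oneTensorMap k A φ (x : A ⊗[k] A) := by
  obtain ⟨j⟩ := nonempty_Jann_linearEquiv hI hJ
  let Θ := LinearEquiv.ofBijective thetaZero (thetaZero_bijective hI hJ)
  exact ⟨⟨Θ ≪≫ₗ Module.Dual.congr j ≪≫ₗ LinearMap.ringLmapEquivSelf A A A⟩, ⟨j⟩, Θ,
    fun φ x => (oneTensorMap_eq_baseChange φ x).symm⟩

/-- Let `k` be a commutative ring and `A` a commutative `k`-algebra which, as
a `k`-module, is finitely generated projective of constant rank `r`.  Assume the ideals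
`I = ker(μ : A ⊗[k] A → A)` and `J = Ann_{A⊗[k]A}(I)` are principal.  Then the `A`-modules
`A^∨ = Hom_k(A,k)` and `J` are both free of rank one, and the map `θ0 : A^∨ → Hom_A(J, A)`,
sending `φ` to the restriction to `J` of `1 ⊗ φ : A ⊗[k] A → A` (`a ⊗ b ↦ φ(b)·a`), is an
`A`-linear isomorphism. -/
theorem stmt0 (r : ℕ) [Module.Finite k A] [Module.Projective k A]
    (hrank : ∀ (p : Ideal k) [p.IsPrime],
      Nonempty (LocalizedModule p.primeCompl A ≃ₗ[Localization p.primeCompl]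
        (Fin r → Localization p.primeCompl)))
    (hI : (Imul k A).IsPrincipal) (hJ : (Jann k A).IsPrincipal) :
    Nonempty (Module.Dual k A ≃ₗ[A] A) ∧
      Nonempty (↥(Jann k A) ≃ₗ[A] A) ∧
      ∃ Θ : Module.Dual k A ≃ₗ[A] (↥(Jann k A) →ₗ[A] A),
        ∀ (φ : Module.Dual k A) (x : ↥(Jann k A)),
          Θ φ x = oneTensorMap k A φ (x : A ⊗[k] A) := by
  exact stmt0_general k A hI hJ

end
end

section
/- Under these hypotheses, the A-modules I and B = (A ⊗[k] A)/J are finitely generated projective of constant rank r−1, and J is a free A-module of rank one. -/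
/-! The multiplication map splits `A`-linearly, so `A ⊗[k] A ≃ I × A` over `A`, which makes `I`
projective of rank `r - 1`. A generator of `I` has annihilator `J`, whence `B ≃ I`; thus `B` is
projective as well, and the quotient map onto it splits: `A ⊗[k] A ≃ J × B ≃ J × I`. Comparing the
two decompositions gives `I × J ≃ I × A`, and the free module of rank one can be cancelled against
finitely generated projective modules. After adding a complement of `I`, this is the fact that the
kernel of a surjection `Rⁿ⁺¹ → Rⁿ` is free of rank one, generated by the vector of maximal
minors. -/

open TensorProduct

noncomputable section

variable (k A : Type*) [CommRing k] [CommRing A] [Algebra k A]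

section MaximalMinors

variable {R n : Type*} [CommRing R] [Fintype n] [DecidableEq n]

/-- The maximal minors, up to sign, of a matrix with one more column than rows: the `i`-th one is
the determinant of `M` with the `i`-th standard basis vector added as a last row. -/
def maximalMinors (M : Matrix n (n ⊕ Unit) R) (i : n ⊕ Unit) : R :=
  (Matrix.fromRows M (Matrix.replicateRow Unit (Pi.single i 1))).det

theorem vecMulVec_maximalMinors {M : Matrix n (n ⊕ Unit) R} {S : Matrix (n ⊕ Unit) n R}
    (h : M * S = 1) :
    Matrix.vecMulVec (maximalMinors M) (maximalMinors S.transpose) = 1 - S * M := by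
  ext i j
  have hdet : maximalMinors S.transpose j =
      (Matrix.fromCols S (Matrix.replicateCol Unit (Pi.single j 1))).det := by
    rw [← Matrix.det_transpose, Matrix.transpose_fromCols]
    rfl
  -- The product of the two bordered matrices has upper left block `M * S = 1`, so its determinant
  -- is the Schur complement of that block.
  rw [Matrix.vecMulVec_apply, hdet, maximalMinors, ← Matrix.det_mul,
    Matrix.fromRows_mul_fromCols, h, Matrix.det_fromBlocks_one₁₁, Matrix.det_unique]
  simp [Matrix.mul_apply, Matrix.one_apply, Pi.single_apply, eq_comm]

theorem maximalMinors_dotProduct_maximalMinors {M : Matrix n (n ⊕ Unit) R}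
    {S : Matrix (n ⊕ Unit) n R} (h : M * S = 1) :
    maximalMinors M ⬝ᵥ maximalMinors S.transpose = 1 := by
  rw [← Matrix.trace_vecMulVec, vecMulVec_maximalMinors h, Matrix.trace_sub, Matrix.trace_mul_comm,
    h]
  simp

end MaximalMinors

theorem nonempty_linearEquiv_prod_of_surjective {R S M P : Type*} [CommRing R] [CommRing S]
    [Algebra R S] [AddCommGroup M] [Module R M] [Module S M] [IsScalarTower R S M]
    [AddCommGroup P] [Module R P] [Module.Projective R P]
    (N : Submodule S M) (f : M →ₗ[R] P) (hf : Function.Surjective f)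
    (hker : LinearMap.ker f = N.restrictScalars R) : Nonempty (M ≃ₗ[R] N × P) := by
  have hexact : Function.Exact (N.subtype.restrictScalars R) f :=
    LinearMap.exact_iff.2 (by rw [hker]; ext; simp)
  obtain ⟨s, hs⟩ := f.exists_rightInverse_of_surjective (LinearMap.range_eq_top.2 hf)
  exact ⟨(hexact.splitSurjectiveEquiv N.injective_subtype ⟨s, hs⟩).1⟩

section Cancellation

variable {R L M : Type*} [CommRing R] [AddCommGroup L] [Module R L] [AddCommGroup M] [Module R M]

theorem nonempty_linearEquiv_self_of_pi_prod_equiv {n : Type*} [Finite n]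
    (φ : ((n → R) × L) ≃ₗ[R] (n ⊕ Unit → R)) : Nonempty (L ≃ₗ[R] R) := by
  classical
  have := Fintype.ofFinite n
  let σ : (n → R) →ₗ[R] (n ⊕ Unit → R) := φ.toLinearMap ∘ₗ LinearMap.inl R (n → R) L
  let ρ : (n ⊕ Unit → R) →ₗ[R] (n → R) := LinearMap.fst R (n → R) L ∘ₗ φ.symm.toLinearMap
  let ι : L →ₗ[R] (n ⊕ Unit → R) := φ.toLinearMap ∘ₗ LinearMap.inr R (n → R) L
  let π : (n ⊕ Unit → R) →ₗ[R] L := LinearMap.snd R (n → R) L ∘ₗ φ.symm.toLinearMap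
  have hρσ : ρ.toMatrix' * σ.toMatrix' = 1 := by
    rw [← LinearMap.toMatrix'_comp, ← LinearMap.toMatrix'_id]
    congr 1
    ext
    simp [ρ, σ]
  let c := maximalMinors ρ.toMatrix'
  let d := maximalMinors σ.toMatrix'.transpose
  have hcd : d ⬝ᵥ c = 1 :=
    (dotProduct_comm d c).trans (maximalMinors_dotProduct_maximalMinors hρσ)
  have hπι (l : L) : π (ι l) = l := by simp [π, ι]
  have hιπ (v : n ⊕ Unit → R) : ι (π v) = (d ⬝ᵥ v) • c := by
    have hsum : σ (ρ v) + ι (π v) = v := by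
      simp [σ, ρ, ι, π, ← map_add]
    calc ι (π v) = (1 - σ.toMatrix' * ρ.toMatrix').mulVec v := by
          rw [Matrix.sub_mulVec, Matrix.one_mulVec, ← LinearMap.toMatrix'_comp,
            LinearMap.toMatrix'_mulVec, eq_sub_iff_add_eq']
          exact hsum
      _ = (d ⬝ᵥ v) • c := by
          rw [← vecMulVec_maximalMinors hρσ, Matrix.vecMulVec_mulVec, op_smul_eq_smul]
  refine ⟨.ofLinearMap (dotProductBilin R R d ∘ₗ ι) (LinearMap.toSpanSingleton R L (π c)) ?_ ?_⟩
  · ext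
    simp [hιπ, hcd]
  · ext l
    calc (d ⬝ᵥ ι l) • π c = π (ι (π (ι l))) := by rw [hιπ (ι l), map_smul]
      _ = l := by rw [hπι, hπι]

theorem nonempty_linearEquiv_self_of_prod_equiv [Module.Finite R M] [Module.Projective R M]
    (e : (M × L) ≃ₗ[R] (M × R)) : Nonempty (L ≃ₗ[R] R) := by
  obtain ⟨n, f, -, hf, -, -⟩ := Module.Finite.exists_comp_eq_id_of_projective R M
  obtain ⟨e'⟩ := nonempty_linearEquiv_prod_of_surjective (LinearMap.ker f) f hf rfl
  exact nonempty_linearEquiv_self_of_pi_prod_equiv <|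
    e'.prodCongr (.refl R L) ≪≫ₗ .prodAssoc R _ M L ≪≫ₗ (LinearEquiv.refl R _).prodCongr e ≪≫ₗ
      (LinearEquiv.prodAssoc R _ M R).symm ≪≫ₗ
      e'.symm.prodCongr (LinearEquiv.funUnique Unit R R).symm ≪≫ₗ
      (LinearEquiv.sumArrowLequivProdArrow (Fin n) Unit R R).symm

end Cancellation

/-- `M` is a finitely generated projective `R`-module of constant rank `n`: its localization at
every prime ideal is free of rank `n`. -/
structure IsProjectiveOfRank (R M : Type*) [CommRing R] [AddCommGroup M] [Module R M] (n : ℕ) :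
    Prop where
  finite : Module.Finite R M
  projective : Module.Projective R M
  nonempty_localizedModule_equiv (p : Ideal R) [p.IsPrime] :
    Nonempty (LocalizedModule p.primeCompl M ≃ₗ[Localization p.primeCompl]
      (Fin n → Localization p.primeCompl))

namespace IsProjectiveOfRank

variable {R M N : Type*} [CommRing R] [AddCommGroup M] [Module R M] [AddCommGroup N] [Module R N]
  {n : ℕ}

theorem rankAtStalk_eq (h : IsProjectiveOfRank R M n) (p : PrimeSpectrum R) :
    Module.rankAtStalk M p = n := by
  obtain ⟨e⟩ := h.nonempty_localizedModule_equiv p.asIdeal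
  have : Nontrivial (Localization p.asIdeal.primeCompl) :=
    inferInstanceAs (Nontrivial (Localization.AtPrime p.asIdeal))
  exact e.finrank_eq.trans (Module.finrank_fin_fun _)

theorem of_rankAtStalk_eq [Module.Finite R M] [Module.Projective R M]
    (h : ∀ p : PrimeSpectrum R, Module.rankAtStalk M p = n) : IsProjectiveOfRank R M n where
  finite := inferInstance
  projective := inferInstance
  nonempty_localizedModule_equiv p hp := by
    have : IsLocalRing (Localization p.primeCompl) :=
      inferInstanceAs (IsLocalRing (Localization.AtPrime p))
    have : Module.Free (Localization p.primeCompl) (LocalizedModule p.primeCompl M) :=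
      Module.free_of_flat_of_isLocalRing
    exact ⟨(Module.finBasisOfFinrankEq _ _ (h ⟨p, hp⟩)).equivFun⟩

theorem congr (h : IsProjectiveOfRank R M n) (e : M ≃ₗ[R] N) : IsProjectiveOfRank R N n := by
  have := h.finite
  have := h.projective
  have := Module.Finite.equiv e
  have := Module.Projective.of_equiv e
  exact of_rankAtStalk_eq fun p ↦ by rw [← Module.rankAtStalk_eq_of_equiv e, h.rankAtStalk_eq]

theorem baseChange (S : Type*) [CommRing S] [Algebra R S] (h : IsProjectiveOfRank R M n) :
    IsProjectiveOfRank S (S ⊗[R] M) n := by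
  have := h.finite
  have := h.projective
  exact of_rankAtStalk_eq fun p ↦ by rw [Module.rankAtStalk_baseChange, h.rankAtStalk_eq]

theorem of_prod_self (h : IsProjectiveOfRank R (M × R) n) : IsProjectiveOfRank R M (n - 1) := by
  have := h.finite
  have := h.projective
  have : Module.Finite R M := .of_surjective (LinearMap.fst R M R) LinearMap.fst_surjective
  have : Module.Projective R M :=
    .of_split (LinearMap.inl R M R) (LinearMap.fst R M R) (LinearMap.fst_comp_inl R M R)
  refine of_rankAtStalk_eq fun p ↦ ?_
  have := p.nontrivial
  have hrank : Module.rankAtStalk M p + 1 = n := by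
    rw [← h.rankAtStalk_eq p, Module.rankAtStalk_prod, Module.rankAtStalk_self]
    rfl
  exact Nat.eq_sub_of_add_eq hrank

end IsProjectiveOfRank

theorem nonempty_quotient_annihilator_equiv {S M : Type*} [CommRing S] [AddCommGroup M]
    [Module S M] {N : Submodule S M} (hN : N.IsPrincipal) :
    Nonempty ((S ⧸ N.annihilator) ≃ₗ[S] N) := by
  obtain ⟨u, rfl⟩ := hN
  exact ⟨Submodule.quotEquivOfEq _ _ (Ideal.annihilator_span_singleton_eq_torsionOf u) ≪≫ₗ
    Ideal.quotTorsionOfEquivSpanSingleton S M u⟩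

theorem nonempty_tensorProduct_equiv_Imul_prod :
    Nonempty (A ⊗[k] A ≃ₗ[A] Imul k A × A) :=
  nonempty_linearEquiv_prod_of_surjective (Imul k A) (Algebra.TensorProduct.lmul'' k).toLinearMap
    (fun a ↦ ⟨a ⊗ₜ 1, by simp [Algebra.TensorProduct.lmul'']⟩) rfl

theorem stmt2_general (r : ℕ) (hA : IsProjectiveOfRank k A r) (hI : (Imul k A).IsPrincipal) :
    IsProjectiveOfRank A (Imul k A) (r - 1) ∧
      IsProjectiveOfRank A ((A ⊗[k] A) ⧸ Jann k A) (r - 1) ∧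
      Nonempty (Jann k A ≃ₗ[A] A) := by
  obtain ⟨eI⟩ := nonempty_tensorProduct_equiv_Imul_prod k A
  obtain ⟨eB⟩ := nonempty_quotient_annihilator_equiv hI
  have hIrank : IsProjectiveOfRank A (Imul k A) (r - 1) := ((hA.baseChange A).congr eI).of_prod_self
  have hBrank : IsProjectiveOfRank A ((A ⊗[k] A) ⧸ Jann k A) (r - 1) :=
    hIrank.congr (eB.symm.restrictScalars A)
  have := hIrank.finite
  have := hIrank.projective
  have := hBrank.projective
  obtain ⟨eJ⟩ := nonempty_linearEquiv_prod_of_surjective (Jann k A)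
    ((Jann k A).mkQ.restrictScalars A) (Jann k A).mkQ_surjective (by ext; simp)
  let e : (Imul k A × Jann k A) ≃ₗ[A] (Imul k A × A) :=
    (eB.symm.restrictScalars A).prodCongr (.refl A _) ≪≫ₗ .prodComm A _ _ ≪≫ₗ eJ.symm ≪≫ₗ eI
  exact ⟨hIrank, hBrank, nonempty_linearEquiv_self_of_prod_equiv e⟩

/-- Let `k` be a commutative ring and `A` a commutative `k`-algebra which, as
a `k`-module, is finitely generated projective of constant rank `r`.  Assume the ideals
`I = ker(μ)` and `J = Ann(I)` of `A ⊗[k] A` are principal.  Then the `A`-modules `I` and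
`B = (A ⊗[k] A)/J` are finitely generated projective of constant rank `r − 1`, and `J` is a
free `A`-module of rank one. -/
theorem stmt2 (r : ℕ) [Module.Finite k A] [Module.Projective k A]
    (hrank : ∀ (p : Ideal k) [p.IsPrime],
      Nonempty (LocalizedModule p.primeCompl A ≃ₗ[Localization p.primeCompl]
        (Fin r → Localization p.primeCompl)))
    (hI : (Imul k A).IsPrincipal) (hJ : (Jann k A).IsPrincipal) :
    (Module.Finite A ↥(Imul k A) ∧ Module.Projective A ↥(Imul k A) ∧
        ∀ (q : Ideal A) [q.IsPrime],
          Nonempty (LocalizedModule q.primeCompl ↥(Imul k A) ≃ₗ[Localization q.primeCompl]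
            (Fin (r - 1) → Localization q.primeCompl))) ∧
      (Module.Finite A ((A ⊗[k] A) ⧸ (Jann k A)) ∧
          Module.Projective A ((A ⊗[k] A) ⧸ (Jann k A)) ∧
          ∀ (q : Ideal A) [q.IsPrime],
            Nonempty (LocalizedModule q.primeCompl ((A ⊗[k] A) ⧸ (Jann k A))
              ≃ₗ[Localization q.primeCompl] (Fin (r - 1) → Localization q.primeCompl))) ∧
      Nonempty (↥(Jann k A) ≃ₗ[A] A) := by
  obtain ⟨hIrank, hBrank, hJfree⟩ := stmt2_general k A r ⟨inferInstance, inferInstance, hrank⟩ hI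
  exact ⟨⟨hIrank.1, hIrank.2, hIrank.3⟩, ⟨hBrank.1, hBrank.2, hBrank.3⟩, hJfree⟩

end
end

section
/- Under these hypotheses (with r ≥ 1), the k-linear map ψ : ⋀^{r−1}_k A → ⋀^{r−1}_A B, determined by ψ(a_1 ∧ ⋯ ∧ a_{r−1}) = q(1⊗a_1) ∧_A ⋯ ∧_A q(1⊗a_{r−1}) where q : A ⊗[k] A → B is the quotient map, is an isomorphism (here the source is the (r−1)-st exterior power of A as a k-module and the target is the (r−1)-st exterior power of B as an A-module). -/
open TensorProduct

noncomputable section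

variable (k A : Type*) [CommRing k] [CommRing A] [Algebra k A]

/-- `B = (A ⊗[k] A)/J`, an `A`-algebra via `a ↦ a ⊗ 1`. -/
def Bquot : Type _ := (A ⊗[k] A) ⧸ (Jann k A)

instance : CommRing (Bquot k A) := inferInstanceAs (CommRing ((A ⊗[k] A) ⧸ (Jann k A)))
instance : Algebra A (Bquot k A) := inferInstanceAs (Algebra A ((A ⊗[k] A) ⧸ (Jann k A)))

/-- The quotient map `q : A ⊗[k] A → B`. -/
def qmap : A ⊗[k] A →+* Bquot k A := Ideal.Quotient.mk (Jann k A)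

/-
Let `g` generate `J`. Then `g * z = μ(z) • g`, so `B` is the quotient of the `A`-module `A ⊗[k] A`
by the line `A ∙ g`; because `I` is principal too, some `A`-linear form takes the value `1` at `g`.
Hence `y ↦ g ∧ y` identifies `⋀^n B`, where `n = r - 1`, with its image in `⋀^(n + 1) (A ⊗[k] A)`,
and the slices of `g` by `k`-linear forms on either tensor factor fill all of `A`. Write
`θ : ⋀[k] A → ⋀[A] (A ⊗[k] A)` for the base change map.

Injectivity: if `g ∧ θ w = 0`, slicing on the left gives `a ∧ w = 0` for all `a : A`. Contracting
with a dual basis `(e i, φ i)`, the identities `∑ φ i (e i) = n + 1` and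
`∑ e i ∧ (φ i ⌟ w) = n w` give `w = (n + 1) w - n w = 0`.

Surjectivity: for `x` of degree `n + 1`, `g ∧ θ x` vanishes for degree reasons, and contracting it
with `φ` gives `φ(g) • θ x = g ∧ θ (φ ⌟ x)`. Since the `φ(g)` fill `A`, every element of
`⋀^(n + 1) (A ⊗[k] A)` has the form `g ∧ θ w`.
-/

section DualBasis

open Module

variable {R M α : Type*} [CommRing R] [AddCommGroup M] [Module R M] [Fintype α]

/-- A finite dual basis, in the sense of the dual basis lemma for finitely generated projective
modules: vectors `e i` and functionals `φ i` with `x = ∑ i, φ i x • e i` for all `x`. The `e i`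
need not be linearly independent. -/
def IsDualBasis (e : α → M) (φ : α → Dual R M) : Prop :=
  ∀ x, ∑ i, φ i x • e i = x

theorem exists_isDualBasis (R M : Type*) [CommRing R] [AddCommGroup M] [Module R M]
    [Module.Finite R M] [Projective R M] :
    ∃ (m : ℕ) (e : Fin m → M) (φ : Fin m → Dual R M), IsDualBasis e φ := by
  obtain ⟨m, f, g, -, -, hfg⟩ := Finite.exists_comp_eq_id_of_projective R M
  refine ⟨m, fun i ↦ f (Pi.single i 1), fun i ↦ .proj i ∘ₗ g, fun x ↦ ?_⟩
  calc ∑ i, g x i • f (Pi.single i 1) = f (g x) := by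
        conv_rhs => rw [pi_eq_sum_univ' (g x), map_sum]
        simp only [map_smul]
    _ = x := LinearMap.congr_fun hfg x

theorem IsDualBasis.baseChange (S : Type*) [CommRing S] [Algebra R S] {e : α → M}
    {φ : α → Dual R M} (h : IsDualBasis e φ) :
    IsDualBasis (fun i ↦ (1 : S) ⊗ₜ[R] e i) (fun i ↦ (φ i).baseChange S) := fun x ↦ by
  induction x with
  | zero => simp
  | add x y hx hy => simp only [map_add, add_smul, Finset.sum_add_distrib, hx, hy]
  | tmul s x =>
    simp only [Dual.baseChange_apply_tmul, smul_tmul', smul_eq_mul, mul_one, smul_tmul]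
    rw [← tmul_sum, h]

theorem IsDualBasis.sum_apply_eq_finrank [Free R M] [Module.Finite R M] {e : α → M}
    {φ : α → Dual R M} (h : IsDualBasis e φ) : ∑ i, φ i (e i) = finrank R M := by
  have hid : ∑ i, (φ i).smulRight (e i) = LinearMap.id :=
    LinearMap.ext fun x ↦ by simpa [LinearMap.sum_apply] using h x
  simpa only [map_sum, LinearMap.trace_smulRight, LinearMap.trace_id] using
    congrArg (LinearMap.trace R M) hid

end DualBasis

section ConstantRank

open Module

variable {R M : Type*} [CommRing R] [AddCommGroup M] [Module R M] {r : ℕ}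

/-- `M` is locally free of constant rank `r`: its localization at every prime ideal is free of
rank `r`. -/
def HasConstantRank (R M : Type*) [CommRing R] [AddCommGroup M] [Module R M] (r : ℕ) : Prop :=
  ∀ (p : Ideal R) [p.IsPrime],
    Nonempty (LocalizedModule p.primeCompl M ≃ₗ[Localization p.primeCompl]
      (Fin r → Localization p.primeCompl))

theorem HasConstantRank.free_finite_finrank_localization (h : HasConstantRank R M r)
    (p : Ideal R) [p.IsPrime] :
    Free (Localization p.primeCompl) (Localization p.primeCompl ⊗[R] M) ∧
      Module.Finite (Localization p.primeCompl) (Localization p.primeCompl ⊗[R] M) ∧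
      finrank (Localization p.primeCompl) (Localization p.primeCompl ⊗[R] M) = r := by
  obtain ⟨b⟩ := (h p).map (LocalizedModule.equivTensorProduct p.primeCompl M).symm.trans
  exact ⟨.of_equiv b.symm, .equiv b.symm, by rw [b.finrank_eq, finrank_fin_fun]⟩

theorem HasConstantRank.sum_apply_eq_natCast {α : Type*} [Fintype α] (h : HasConstantRank R M r)
    {e : α → M} {φ : α → Dual R M} (he : IsDualBasis e φ) : ∑ i, φ i (e i) = (r : R) := by
  refine sub_eq_zero.1 (eq_zero_of_localization _ fun p _ ↦ ?_)
  obtain ⟨_, _, hr⟩ := h.free_finite_finrank_localization p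
  have htrace := (he.baseChange (Localization p.primeCompl)).sum_apply_eq_finrank
  rw [map_sub, sub_eq_zero, map_sum, map_natCast, ← hr, ← htrace]
  simp [Algebra.algebraMap_eq_smul_one]

end ConstantRank

local notation:70 φ:70 "⌟" x:71 => CliffordAlgebra.contractLeft (Q := 0) φ x

section Contraction

open ExteriorAlgebra
open CliffordAlgebra (contractLeft_ι contractLeft_ι_mul contractLeft_algebraMap left_induction)

variable {R M N : Type*} [CommRing R] [AddCommGroup M] [Module R M] [AddCommGroup N]
  [Module R N] {n : ℕ}

theorem ι_mul_ι_eq_neg (x y : M) : ι R x * ι R y = -(ι R y * ι R x) :=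
  eq_neg_of_add_eq_zero_left (ι_add_mul_swap x y)

theorem ι_mul_mem_exteriorPower (v : M) {x : ExteriorAlgebra R M} (hx : x ∈ ⋀[R]^n M) :
    ι R v * x ∈ ⋀[R]^(n + 1) M := by
  rw [exteriorPower, pow_succ']
  exact Submodule.mul_mem_mul ⟨v, rfl⟩ hx

@[elab_as_elim]
theorem exteriorPower_succ_induction {P : ExteriorAlgebra R M → Prop}
    (ι_mul : ∀ v, ∀ x ∈ ⋀[R]^n M, P (ι R v * x)) (add : ∀ x y, P x → P y → P (x + y))
    {x : ExteriorAlgebra R M} (hx : x ∈ ⋀[R]^(n + 1) M) : P x := by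
  rw [exteriorPower, pow_succ'] at hx
  refine Submodule.mul_induction_on hx ?_ add
  rintro _ ⟨v, rfl⟩ x hx
  exact ι_mul v x hx

theorem contractLeft_mem_exteriorPower (φ : Module.Dual R M) {x : ExteriorAlgebra R M}
    (hx : x ∈ ⋀[R]^(n + 1) M) : φ ⌟ x ∈ ⋀[R]^n M := by
  induction n generalizing x with
  | zero =>
    obtain ⟨v, rfl⟩ : x ∈ (ι R).range := by simpa using hx
    simp [contractLeft_ι]
  | succ n ih =>
    refine exteriorPower_succ_induction (fun v y hy ↦ ?_) (fun x y hx hy ↦ ?_) hx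
    · rw [contractLeft_ι_mul]
      exact sub_mem (Submodule.smul_mem _ _ hy) (ι_mul_mem_exteriorPower v (ih hy))
    · rw [map_add]
      exact add_mem hx hy

theorem IsDualBasis.sum_ι_mul_contractLeft {α : Type*} [Fintype α] {e : α → M}
    {φ : α → Module.Dual R M} (h : IsDualBasis e φ) {x : ExteriorAlgebra R M}
    (hx : x ∈ ⋀[R]^n M) : ∑ i, ι R (e i) * (φ i ⌟ x) = n • x := by
  induction n generalizing x with
  | zero =>
    obtain ⟨c, rfl⟩ : ∃ c, algebraMap R _ c = x := by simpa [Submodule.mem_one] using hx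
    simp [contractLeft_algebraMap]
  | succ n ih =>
    refine exteriorPower_succ_induction (fun v y hy ↦ ?_) (fun x y hx hy ↦ ?_) hx
    · calc ∑ i, ι R (e i) * (φ i ⌟ (ι R v * y))
          = ∑ i, (ι R (φ i v • e i) * y + ι R v * (ι R (e i) * (φ i ⌟ y))) := by
            refine Finset.sum_congr rfl fun i _ ↦ ?_
            rw [contractLeft_ι_mul, mul_sub, ← mul_assoc, ι_mul_ι_eq_neg (e i), map_smul,
              mul_smul_comm, smul_mul_assoc, neg_mul, sub_neg_eq_add, mul_assoc]
        _ = ι R v * y + ι R v * (n • y) := by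
            rw [Finset.sum_add_distrib, ← Finset.sum_mul, ← map_sum, h, ← Finset.mul_sum, ih hy]
        _ = (n + 1) • (ι R v * y) := by rw [mul_smul_comm, succ_nsmul']
    · simp only [map_add, mul_add, Finset.sum_add_distrib, hx, hy, smul_add]

theorem IsDualBasis.eq_zero_of_forall_ι_mul_eq_zero {α : Type*} [Fintype α] {e : α → M}
    {φ : α → Module.Dual R M} (h : IsDualBasis e φ) (htrace : ∑ i, φ i (e i) = ((n + 1 : ℕ) : R))
    {x : ExteriorAlgebra R M} (hx : x ∈ ⋀[R]^n M) (hmul : ∀ v, ι R v * x = 0) : x = 0 := by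
  have hcontract : ∑ i, φ i ⌟ (ι R (e i) * x) = x := by
    simp only [contractLeft_ι_mul, Finset.sum_sub_distrib]
    rw [← Finset.sum_smul, htrace, h.sum_ι_mul_contractLeft hx, Nat.cast_smul_eq_nsmul,
      succ_nsmul, add_sub_cancel_left]
  simpa only [hmul, map_zero, Finset.sum_const_zero] using hcontract.symm

theorem ι_mul_map_id_sub_smulRight (p : Module.Dual R M) (g : M) (x : ExteriorAlgebra R M) :
    ι R g * map (LinearMap.id - p.smulRight g) x = ι R g * x := by
  induction x using left_induction with
  | algebraMap c => simp
  | add x y hx hy => simp only [map_add, mul_add, hx, hy]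
  | ι_mul x v hx =>
    change ι R g * ExteriorAlgebra.map _ (ι R v * x) = ι R g * (ι R v * x)
    have hv : ι R g * ι R ((LinearMap.id - p.smulRight g : M →ₗ[R] M) v) = ι R g * ι R v := by
      simp [mul_sub]
    rw [map_mul, map_apply_ι, ← mul_assoc, hv, ← mul_assoc, ι_mul_ι_eq_neg, neg_mul, neg_mul,
      mul_assoc, mul_assoc, hx]

theorem map_contractLeft_ι_mul {q : M →ₗ[R] N} {p : Module.Dual R M} {g : M} (hq : q g = 0)
    (hp : p g = 1) (x : ExteriorAlgebra R M) : map q (p ⌟ (ι R g * x)) = map q x := by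
  simp [contractLeft_ι_mul, hq, hp]

theorem ι_mul_eq_zero_of_map_eq_zero {q : M →ₗ[R] N} (hq : Function.Surjective q)
    {p : Module.Dual R M} {g : M} (hker : q.ker = R ∙ g) (hp : p g = 1) {x : ExteriorAlgebra R M}
    (hx : map q x = 0) : ι R g * x = 0 := by
  obtain ⟨σ, hσ⟩ : ∃ σ : N →ₗ[R] M, σ ∘ₗ q = LinearMap.id - p.smulRight g := by
    have hle : q.ker ≤ (LinearMap.id - p.smulRight g).ker := by
      rw [hker, Submodule.span_singleton_le_iff_mem]
      simp [hp]
    refine ⟨q.ker.liftQ _ hle ∘ₗ (q.quotKerEquivOfSurjective hq).symm, LinearMap.ext fun y ↦ ?_⟩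
    simp [LinearMap.quotKerEquivOfSurjective_symm_apply]
  rw [← ι_mul_map_id_sub_smulRight p, ← hσ, ← map_comp_map, AlgHom.comp_apply, hx, map_zero,
    mul_zero]

end Contraction

section BaseChange

open ExteriorAlgebra
open CliffordAlgebra (contractLeft_ι_mul contractLeft_algebraMap left_induction)

variable {R S M : Type*} [CommRing R] [CommRing S] [Algebra R S] [AddCommGroup M] [Module R M]
  {n : ℕ}

section

variable (R S M)

/-- The map `⋀[R] M → ⋀[S] (S ⊗[R] M)` of exterior algebras extending `m ↦ 1 ⊗ₜ m`. -/
def exteriorAlgebraToBaseChange : ExteriorAlgebra R M →ₐ[R] ExteriorAlgebra S (S ⊗[R] M) :=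
  ExteriorAlgebra.lift R ⟨(ι S).restrictScalars R ∘ₗ TensorProduct.mk R S M 1, fun m ↦ by simp⟩

variable (n) in
/-- The map `⋀[R]^n M → ⋀[S]^n (S ⊗[R] M)` of exterior powers sending `m₁ ∧ ⋯ ∧ mₙ` to
`(1 ⊗ₜ m₁) ∧ ⋯ ∧ (1 ⊗ₜ mₙ)`. -/
def exteriorPowerToBaseChange : ⋀[R]^n M →ₗ[R] ⋀[S]^n (S ⊗[R] M) :=
  exteriorPower.alternatingMapLinearEquiv <|
    { ((exteriorPower.ιMulti S n).toMultilinearMap.restrictScalars R).compLinearMap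
        fun _ ↦ TensorProduct.mk R S M 1 with
      map_eq_zero_of_eq' _ _ _ h hij :=
        (exteriorPower.ιMulti S n).map_eq_zero_of_eq _ (congrArg (1 ⊗ₜ ·) h) hij }

end

@[simp]
theorem exteriorAlgebraToBaseChange_ι (m : M) :
    exteriorAlgebraToBaseChange R S M (ι R m) = ι S (1 ⊗ₜ m) := by
  simp [exteriorAlgebraToBaseChange]

theorem exteriorAlgebraToBaseChange_algebraMap (c : R) :
    exteriorAlgebraToBaseChange R S M (algebraMap R _ c) =
      algebraMap S _ (algebraMap R S c) := by
  rw [AlgHom.commutes, IsScalarTower.algebraMap_apply R S]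

@[simp]
theorem exteriorPowerToBaseChange_ιMulti (v : Fin n → M) :
    exteriorPowerToBaseChange R S M n (exteriorPower.ιMulti R n v) =
      exteriorPower.ιMulti S n fun i ↦ 1 ⊗ₜ v i :=
  exteriorPower.alternatingMapLinearEquiv_apply_ιMulti _ v

theorem coe_exteriorPowerToBaseChange (x : ⋀[R]^n M) :
    (exteriorPowerToBaseChange R S M n x : ExteriorAlgebra S (S ⊗[R] M)) =
      exteriorAlgebraToBaseChange R S M x := by
  suffices ((⋀[S]^n (S ⊗[R] M)).subtype.restrictScalars R) ∘ₗ exteriorPowerToBaseChange R S M n =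
      (exteriorAlgebraToBaseChange R S M).toLinearMap ∘ₗ (⋀[R]^n M).subtype from
    LinearMap.congr_fun this x
  ext v
  simp [ιMulti_apply, map_list_prod, List.map_ofFn, Function.comp_def]

theorem coe_exteriorPower_map {N : Type*} [AddCommGroup N] [Module R N] (f : M →ₗ[R] N)
    (x : ⋀[R]^n M) : (exteriorPower.map n f x : ExteriorAlgebra R N) = ExteriorAlgebra.map f x := by
  suffices (⋀[R]^n N).subtype ∘ₗ exteriorPower.map n f =
      (ExteriorAlgebra.map f).toLinearMap ∘ₗ (⋀[R]^n M).subtype from LinearMap.congr_fun this x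
  ext v
  simp [map_apply_ιMulti]

theorem exteriorAlgebraToBaseChange_contractLeft (φ : Module.Dual R M) (x : ExteriorAlgebra R M) :
    exteriorAlgebraToBaseChange R S M (φ ⌟ x) =
      φ.baseChange S ⌟ exteriorAlgebraToBaseChange R S M x := by
  induction x using left_induction with
  | algebraMap c =>
    change exteriorAlgebraToBaseChange R S M (φ ⌟ algebraMap R _ c) =
      φ.baseChange S ⌟ exteriorAlgebraToBaseChange R S M (algebraMap R _ c)
    simp only [exteriorAlgebraToBaseChange_algebraMap, contractLeft_algebraMap, map_zero]
  | add x y hx hy => simp only [map_add, hx, hy]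
  | ι_mul x v hx =>
    change exteriorAlgebraToBaseChange R S M (φ ⌟ (ι R v * x)) =
      φ.baseChange S ⌟ exteriorAlgebraToBaseChange R S M (ι R v * x)
    simp [contractLeft_ι_mul, hx]

theorem span_range_exteriorPowerToBaseChange :
    Submodule.span S (Set.range (exteriorPowerToBaseChange R S M n)) = ⊤ := by
  have hspan : Submodule.span S (Set.range (TensorProduct.mk R S M 1)) = ⊤ := by
    rw [← Submodule.baseChange_top, Submodule.baseChange_eq_span, Submodule.map_top]
    rfl
  rw [eq_top_iff, ← exteriorPower.ιMulti_span_of_span S n _ hspan]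
  refine Submodule.span_mono ?_
  rintro _ ⟨v, hv, rfl⟩
  choose w hw using fun i ↦ hv ⟨i, rfl⟩
  exact ⟨exteriorPower.ιMulti R n w, by simpa using congrArg _ (funext hw)⟩

theorem baseChange_ι_mul_baseChange_ι_eq_neg (x y : S ⊗[R] M) :
    (ι R).baseChange S x * (ι R).baseChange S y =
      -((ι R).baseChange S y * (ι R).baseChange S x) := by
  induction x with
  | zero => simp
  | add x x' hx hx' => simp only [map_add, add_mul, mul_add, hx, hx', neg_add]
  | tmul s m =>
    induction y with
    | zero => simp
    | add y y' hy hy' => simp only [map_add, add_mul, mul_add, hy, hy', neg_add]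
    | tmul t m' => simp [ι_mul_ι_eq_neg m m', mul_comm s t, tmul_neg]

theorem baseChange_ι_sq_zero (x : S ⊗[R] M) :
    (ι R).baseChange S x * (ι R).baseChange S x = 0 := by
  induction x with
  | zero => simp
  | add x y hx hy =>
    rw [map_add, add_mul, mul_add, mul_add, hx, hy, baseChange_ι_mul_baseChange_ι_eq_neg x y]
    simp
  | tmul s m => simp

variable (R S M) in
/-- The map `⋀[S] (S ⊗[R] M) → S ⊗[R] ⋀[R] M` extending `s ⊗ₜ m ↦ s ⊗ₜ m`. It is the inverse of
the base change of `exteriorAlgebraToBaseChange`. -/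
def exteriorAlgebraBaseChangeToTensor :
    ExteriorAlgebra S (S ⊗[R] M) →ₐ[S] S ⊗[R] ExteriorAlgebra R M :=
  ExteriorAlgebra.lift S ⟨(ι R).baseChange S, baseChange_ι_sq_zero⟩

theorem exteriorAlgebraBaseChangeToTensor_ι (z : S ⊗[R] M) :
    exteriorAlgebraBaseChangeToTensor R S M (ι S z) = (ι R).baseChange S z := by
  simp [exteriorAlgebraBaseChangeToTensor]

theorem exteriorAlgebraBaseChangeToTensor_toBaseChange (x : ExteriorAlgebra R M) :
    exteriorAlgebraBaseChangeToTensor R S M (exteriorAlgebraToBaseChange R S M x) = 1 ⊗ₜ x := by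
  suffices ((exteriorAlgebraBaseChangeToTensor R S M).restrictScalars R).comp
      (exteriorAlgebraToBaseChange R S M) = Algebra.TensorProduct.includeRight from
    DFunLike.congr_fun this x
  ext m
  simp [exteriorAlgebraBaseChangeToTensor_ι]

theorem ι_lid_rTensor_mul_eq_zero {g : S ⊗[R] M} {w : ExteriorAlgebra R M}
    (h : ι S g * exteriorAlgebraToBaseChange R S M w = 0) (ρ : Module.Dual R S) :
    ι R (TensorProduct.lid R M (ρ.rTensor M g)) * w = 0 := by
  have hslice (z : S ⊗[R] M) : ι R (TensorProduct.lid R M (ρ.rTensor M z)) * w =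
      TensorProduct.lid R _ (ρ.rTensor _ ((ι R).baseChange S z * 1 ⊗ₜ w)) := by
    induction z with
    | zero => simp
    | add x y hx hy => simp only [map_add, add_mul, hx, hy]
    | tmul s m => simp
  rw [hslice, ← exteriorAlgebraBaseChangeToTensor_ι,
    ← exteriorAlgebraBaseChangeToTensor_toBaseChange, ← map_mul, h]
  simp

end BaseChange

section Vanishing

open Module

variable {R S M : Type*} [CommRing R] [AddCommGroup M] [Module R M] {n r : ℕ}

theorem subsingleton_exteriorPower_of_finrank_lt [Nontrivial R] [Free R M] [Module.Finite R M]
    (h : finrank R M < n) : Subsingleton (⋀[R]^n M) := by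
  refine (finrank_eq_zero_iff_of_free R _).1 ?_
  rw [exteriorPower.finrank_eq, Nat.choose_eq_zero_of_lt h]

theorem HasConstantRank.subsingleton_exteriorPower (h : HasConstantRank R M r) (hn : r < n) :
    Subsingleton (⋀[R]^n M) := by
  refine subsingleton_of_forall_eq 0 fun x ↦ Subtype.ext ?_
  refine Module.eq_zero_of_localization_maximal (R := R)
    (fun p _ ↦ Localization p.primeCompl ⊗[R] ExteriorAlgebra R M)
    (fun p _ ↦ TensorProduct.mk R _ _ 1) (x : ExteriorAlgebra R M) fun p hp ↦ ?_
  obtain ⟨_, _, hr⟩ := h.free_finite_finrank_localization p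
  have := subsingleton_exteriorPower_of_finrank_lt (hr.trans_lt hn)
  rw [TensorProduct.mk_apply, ← exteriorAlgebraBaseChangeToTensor_toBaseChange,
    ← coe_exteriorPowerToBaseChange, Subsingleton.elim (exteriorPowerToBaseChange ..) 0]
  simp

theorem HasConstantRank.subsingleton_exteriorPower_baseChange [CommRing S] [Algebra R S]
    (h : HasConstantRank R M r) (hn : r < n) : Subsingleton (⋀[S]^n (S ⊗[R] M)) := by
  have := h.subsingleton_exteriorPower hn
  have hspan := span_range_exteriorPowerToBaseChange (R := R) (S := S) (M := M) (n := n)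
  rw [Set.range_eq_singleton_iff.2 fun y ↦ by rw [Subsingleton.elim y 0, map_zero],
    Submodule.span_zero_singleton] at hspan
  exact (Submodule.subsingleton_iff S).1 (subsingleton_of_bot_eq_top hspan)

end Vanishing

section Bijective

open ExteriorAlgebra
open CliffordAlgebra (contractLeft_ι_mul)

variable {R S M N : Type*} [CommRing R] [CommRing S] [Algebra R S] [AddCommGroup M] [Module R M]
  [AddCommGroup N] [Module S N] {n : ℕ} {g : S ⊗[R] M}

theorem smul_toBaseChange_eq_ι_mul (h : HasConstantRank R M (n + 1))
    (φ : Module.Dual R M) (x : ⋀[R]^(n + 1) M) :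
    φ.baseChange S g • exteriorAlgebraToBaseChange R S M x =
      ι S g * exteriorAlgebraToBaseChange R S M (φ ⌟ x) := by
  have := h.subsingleton_exteriorPower_baseChange (S := S) (n + 1).lt_succ_self
  have hx : exteriorAlgebraToBaseChange R S M x ∈ ⋀[S]^(n + 1) (S ⊗[R] M) := by
    rw [← coe_exteriorPowerToBaseChange]
    exact SetLike.coe_mem _
  have hzero : ι S g * exteriorAlgebraToBaseChange R S M x = 0 :=
    congrArg Subtype.val (Subsingleton.elim (⟨_, ι_mul_mem_exteriorPower g hx⟩ :
      ⋀[S]^(n + 2) (S ⊗[R] M)) 0)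
  rw [exteriorAlgebraToBaseChange_contractLeft, ← sub_eq_zero, ← contractLeft_ι_mul, hzero,
    map_zero]

theorem exists_ι_mul_toBaseChange_eq (h : HasConstantRank R M (n + 1))
    (hg : Function.Surjective fun φ : Module.Dual R M ↦ φ.baseChange S g)
    (z : ⋀[S]^(n + 1) (S ⊗[R] M)) :
    ∃ w : ⋀[R]^n M, ι S g * exteriorAlgebraToBaseChange R S M w = z := by
  suffices hsmul : ∀ s : S, ∃ w : ⋀[R]^n M,
      ι S g * exteriorAlgebraToBaseChange R S M w = s • (z : ExteriorAlgebra S (S ⊗[R] M)) by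
    simpa using hsmul 1
  have hz : z ∈ Submodule.span S (Set.range (exteriorPowerToBaseChange R S M (n + 1))) := by
    rw [span_range_exteriorPowerToBaseChange]
    trivial
  induction hz using Submodule.span_induction with
  | mem _ hx =>
    obtain ⟨x, rfl⟩ := hx
    intro s
    obtain ⟨φ, rfl⟩ := hg s
    refine ⟨⟨φ ⌟ x, contractLeft_mem_exteriorPower φ x.2⟩, ?_⟩
    rw [coe_exteriorPowerToBaseChange, smul_toBaseChange_eq_ι_mul h]
  | zero => exact fun s ↦ ⟨0, by simp⟩
  | add x y _ _ hx hy =>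
    intro s
    obtain ⟨⟨v, hv⟩, w, hw⟩ := hx s, hy s
    exact ⟨v + w, by simp [mul_add, hv, hw]⟩
  | smul c x _ hx =>
    intro s
    obtain ⟨w, hw⟩ := hx (s * c)
    exact ⟨w, by simp [hw, mul_smul]⟩

theorem exteriorPower_map_toBaseChange_surjective (h : HasConstantRank R M (n + 1))
    (hg : Function.Surjective fun φ : Module.Dual R M ↦ φ.baseChange S g)
    {q : S ⊗[R] M →ₗ[S] N} (hq : Function.Surjective q) (hqg : q g = 0) :
    Function.Surjective fun w ↦ exteriorPower.map n q (exteriorPowerToBaseChange R S M n w) := by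
  intro y
  obtain ⟨z, rfl⟩ := exteriorPower.map_surjective hq y
  obtain ⟨φ, hφ : φ.baseChange S g = 1⟩ := hg 1
  obtain ⟨w, hw⟩ := exists_ι_mul_toBaseChange_eq h hg ⟨_, ι_mul_mem_exteriorPower g z.2⟩
  refine ⟨w, Subtype.ext ?_⟩
  simp only [coe_exteriorPower_map, coe_exteriorPowerToBaseChange]
  rw [← map_contractLeft_ι_mul hqg hφ, hw, map_contractLeft_ι_mul hqg hφ]

theorem exteriorPower_map_toBaseChange_injective [Module.Finite R M] [Module.Projective R M]
    (h : HasConstantRank R M (n + 1))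
    (hg : Function.Surjective fun ρ : Module.Dual R S ↦ TensorProduct.lid R M (ρ.rTensor M g))
    {q : S ⊗[R] M →ₗ[S] N} (hq : Function.Surjective q) (hker : q.ker = S ∙ g)
    {p : Module.Dual S (S ⊗[R] M)} (hp : p g = 1) :
    Function.Injective fun w ↦ exteriorPower.map n q (exteriorPowerToBaseChange R S M n w) := by
  refine (injective_iff_map_eq_zero ((exteriorPower.map n q).toAddMonoidHom.comp
    (exteriorPowerToBaseChange R S M n).toAddMonoidHom)).2 fun w hw ↦ Subtype.ext ?_
  have hmap : ExteriorAlgebra.map q (exteriorAlgebraToBaseChange R S M w) = 0 := by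
    rw [← coe_exteriorPowerToBaseChange, ← coe_exteriorPower_map]
    exact congrArg Subtype.val hw
  have hgw := ι_mul_eq_zero_of_map_eq_zero hq hker hp hmap
  obtain ⟨m, e, φ, he⟩ := exists_isDualBasis R M
  refine he.eq_zero_of_forall_ι_mul_eq_zero (h.sum_apply_eq_natCast he) w.2 fun v ↦ ?_
  obtain ⟨ρ, rfl⟩ := hg v
  exact ι_lid_rTensor_mul_eq_zero hgw ρ

theorem exteriorPower_map_toBaseChange_bijective [Module.Finite R M] [Module.Projective R M]
    (h : HasConstantRank R M (n + 1))
    (hgM : Function.Surjective fun φ : Module.Dual R M ↦ φ.baseChange S g)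
    (hgS : Function.Surjective fun ρ : Module.Dual R S ↦ TensorProduct.lid R M (ρ.rTensor M g))
    {q : S ⊗[R] M →ₗ[S] N} (hq : Function.Surjective q) (hker : q.ker = S ∙ g) :
    Function.Bijective fun w ↦ exteriorPower.map n q (exteriorPowerToBaseChange R S M n w) := by
  have hqg : q g = 0 := LinearMap.mem_ker.1 (hker ▸ Submodule.mem_span_singleton_self g)
  obtain ⟨φ, hφ : φ.baseChange S g = 1⟩ := hgM 1
  exact ⟨exteriorPower_map_toBaseChange_injective h hgS hq hker hφ,
    exteriorPower_map_toBaseChange_surjective h hgM hq hqg⟩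

end Bijective

section Augmentation

variable {R E : Type*} [CommRing R] [CommRing E] [Algebra R E] {μ : E →ₐ[R] R} {f g : E}

theorem mul_eq_smul_of_mem_annihilator_ker (hg : g ∈ (RingHom.ker μ).annihilator) (z : E) :
    g * z = μ z • g := by
  have hz : z - algebraMap R E (μ z) ∈ RingHom.ker μ := by simp [RingHom.mem_ker]
  have hmul := Submodule.mem_annihilator.1 hg _ hz
  rwa [smul_eq_mul, mul_sub, sub_eq_zero, ← Algebra.commutes, ← Algebra.smul_def] at hmul

theorem exists_linearMap_mul_apply_eq_sub [Module.Projective R E]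
    (hf : RingHom.ker μ = Ideal.span {f}) :
    ∃ s : E →ₗ[R] E, ∀ x, f * s x = x - algebraMap R E (μ x) := by
  have hmul (y : E) : f * y ∈ μ.toLinearMap.ker := by
    have : f ∈ RingHom.ker μ := hf ▸ Ideal.mem_span_singleton_self f
    simp [RingHom.mem_ker.1 this]
  have hsurj : Function.Surjective ((LinearMap.mulLeft R f).codRestrict _ hmul) := by
    rintro ⟨x, hx⟩
    obtain ⟨y, rfl⟩ : f ∣ x := Ideal.mem_span_singleton.1 (hf ▸ hx)
    exact ⟨y, rfl⟩
  obtain ⟨s, hs⟩ := Module.projective_lifting_property _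
    ((LinearMap.id - Algebra.linearMap R E ∘ₗ μ.toLinearMap).codRestrict μ.toLinearMap.ker
      fun x ↦ by simp) hsurj
  exact ⟨s, fun x ↦ congrArg Subtype.val (LinearMap.congr_fun hs x)⟩

theorem exists_dual_apply_eq_one [Module.Finite R E] [Module.Projective R E]
    (hf : (RingHom.ker μ).IsPrincipal) (hg : (RingHom.ker μ).annihilator = Ideal.span {g}) :
    ∃ p : Module.Dual R E, p g = 1 := by
  have hgann : g ∈ (RingHom.ker μ).annihilator := hg ▸ Ideal.mem_span_singleton_self g
  obtain ⟨f, hf⟩ := hf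
  obtain ⟨s, hs⟩ := exists_linearMap_mul_apply_eq_sub hf
  have hμf (y : E) : μ (f * y) = 0 := by
    have : f ∈ RingHom.ker μ := hf ▸ Ideal.mem_span_singleton_self f
    rw [map_mul, RingHom.mem_ker.1 this, zero_mul]
  let T : E →ₗ[R] E := μ.toLinearMap.smulRight g +
    s ∘ₗ (LinearMap.id - Algebra.linearMap R E ∘ₗ μ.toLinearMap)
  have hT (x : E) : T x = μ x • g + s (x - algebraMap R E (μ x)) := rfl
  have hTg : T 1 = g := by simp [hT]
  have hsurj : Function.Surjective T := fun y ↦ by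
    have hann : y - s (f * y) ∈ Ideal.span {g} := by
      rw [← hg, hf, Submodule.mem_annihilator_span_singleton, smul_eq_mul, mul_comm, mul_sub, hs,
        hμf, map_zero, sub_zero, sub_self]
    obtain ⟨z, hz⟩ := Ideal.mem_span_singleton.1 hann
    rw [mul_eq_smul_of_mem_annihilator_ker hgann] at hz
    refine ⟨μ z • 1 + f * y, ?_⟩
    rw [map_add, map_smul, hTg, ← hz, hT, hμf, zero_smul, map_zero, sub_zero, zero_add,
      sub_add_cancel]
  let e := LinearEquiv.ofBijective T
    ⟨OrzechProperty.injective_of_surjective_endomorphism T hsurj, hsurj⟩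
  have heg : e.symm g = 1 := e.symm_apply_eq.2 hTg.symm
  exact ⟨μ.toLinearMap ∘ₗ e.symm, by simp [heg]⟩

end Augmentation

section Slices

open Module

variable {R S B : Type*} [CommRing R] [CommRing S] [Algebra R S] [CommRing B] [Algebra R B]

theorem lid_rTensor_eq_baseChange_comm (ρ : Dual R S) (x : S ⊗[R] B) :
    TensorProduct.lid R B (ρ.rTensor B x) = ρ.baseChange B (TensorProduct.comm R S B x) := by
  induction x with
  | zero => simp
  | add x y hx hy => simp only [map_add, hx, hy]
  | tmul s b => simp

theorem baseChange_comp_mulLeft_apply (φ : Dual R B) (b : B) (x : S ⊗[R] B) :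
    Dual.baseChange S (φ ∘ₗ LinearMap.mulLeft R b) x = φ.baseChange S (x * 1 ⊗ₜ b) := by
  induction x with
  | zero => simp
  | add x y hx hy => simp only [map_add, add_mul, hx, hy]
  | tmul s c => simp [mul_comm]

theorem surjective_baseChange_apply [Module.Finite R B] [Projective R B] {g : S ⊗[R] B}
    (hg : ∀ s : S, ∃ b : B, g * 1 ⊗ₜ b = s • g) {p : Dual S (S ⊗[R] B)} (hp : p g = 1) :
    Function.Surjective fun φ : Dual R B ↦ φ.baseChange S g := by
  intro s
  obtain ⟨m, e, φ, he⟩ := exists_isDualBasis R B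
  choose b hb using fun i ↦ hg (s * p (1 ⊗ₜ e i))
  refine ⟨∑ i, φ i ∘ₗ LinearMap.mulLeft R (b i), ?_⟩
  calc Dual.baseChange S (∑ i, φ i ∘ₗ LinearMap.mulLeft R (b i)) g
      = ∑ i, Dual.baseChange S (φ i ∘ₗ LinearMap.mulLeft R (b i)) g := by
        simp [map_sum]
    _ = s * p (∑ i, (φ i).baseChange S g • (1 ⊗ₜ e i)) := by
        rw [map_sum, Finset.mul_sum]
        refine Finset.sum_congr rfl fun i _ ↦ ?_
        rw [baseChange_comp_mulLeft_apply, hb, map_smul, map_smul, smul_eq_mul, smul_eq_mul]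
        ring
    _ = s := by rw [he.baseChange S, hp, mul_one]

end Slices

section MultiplicationKernel

variable {k A} {g : A ⊗[k] A}

theorem comm_mem_Imul {x : A ⊗[k] A} (hx : x ∈ Imul k A) :
    Algebra.TensorProduct.comm k A A x ∈ Imul k A := by
  have hcomm : (Algebra.TensorProduct.lmul' k (S := A)).comp (Algebra.TensorProduct.comm k A A) =
      Algebra.TensorProduct.lmul' k := by ext <;> simp
  exact (DFunLike.congr_fun hcomm x).trans hx

theorem comm_mem_Jann {x : A ⊗[k] A} (hx : x ∈ Jann k A) :
    Algebra.TensorProduct.comm k A A x ∈ Jann k A := by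
  refine Submodule.mem_annihilator.2 fun y hy ↦ ?_
  have hxy := Submodule.mem_annihilator.1 hx _ (comm_mem_Imul hy)
  have hyy : Algebra.TensorProduct.comm k A A (Algebra.TensorProduct.comm k A A y) = y :=
    (Algebra.TensorProduct.comm k A A).symm_apply_apply y
  simpa [hyy] using congrArg (Algebra.TensorProduct.comm k A A) hxy

theorem Jann_eq_span_comm (hg : Jann k A = Ideal.span {g}) :
    Jann k A = Ideal.span {Algebra.TensorProduct.comm k A A g} := by
  refine le_antisymm (fun x hx ↦ ?_) ?_
  · have hdvd : g ∣ Algebra.TensorProduct.comm k A A x :=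
      Ideal.mem_span_singleton.1 (hg ▸ comm_mem_Jann hx)
    have hxx : Algebra.TensorProduct.comm k A A (Algebra.TensorProduct.comm k A A x) = x :=
      (Algebra.TensorProduct.comm k A A).symm_apply_apply x
    exact Ideal.mem_span_singleton.2 (hxx ▸ map_dvd (Algebra.TensorProduct.comm k A A) hdvd)
  · rw [Ideal.span_singleton_le_iff_mem]
    exact comm_mem_Jann (hg ▸ Ideal.mem_span_singleton_self g)

theorem mul_eq_lmul_smul_of_mem_Jann_s3 (hg : g ∈ Jann k A) (z : A ⊗[k] A) :
    g * z = Algebra.TensorProduct.lmul' k z • g :=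
  mul_eq_smul_of_mem_annihilator_ker (μ := Algebra.TensorProduct.lmul'' k) hg z

theorem surjective_baseChange_apply_of_Jann_eq_span [Module.Finite k A] [Module.Projective k A]
    (hI : (Imul k A).IsPrincipal) (hg : Jann k A = Ideal.span {g}) :
    Function.Surjective fun φ : Module.Dual k A ↦ φ.baseChange A g := by
  obtain ⟨p, hp⟩ := exists_dual_apply_eq_one (μ := Algebra.TensorProduct.lmul'' k) hI hg
  refine surjective_baseChange_apply (fun a ↦ ⟨a, ?_⟩) hp
  rw [mul_eq_lmul_smul_of_mem_Jann_s3 (hg ▸ Ideal.mem_span_singleton_self g)]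
  simp

theorem surjective_lid_rTensor_of_Jann_eq_span [Module.Finite k A] [Module.Projective k A]
    (hI : (Imul k A).IsPrincipal) (hg : Jann k A = Ideal.span {g}) :
    Function.Surjective fun ρ : Module.Dual k A ↦ TensorProduct.lid k A (ρ.rTensor A g) := by
  simp only [lid_rTensor_eq_baseChange_comm]
  exact surjective_baseChange_apply_of_Jann_eq_span hI (Jann_eq_span_comm hg)

theorem span_singleton_eq_restrictScalars_Jann (hg : Jann k A = Ideal.span {g}) :
    A ∙ g = (Jann k A).restrictScalars A := by
  have hmem : g ∈ Jann k A := hg ▸ Ideal.mem_span_singleton_self g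
  refine le_antisymm ((Submodule.span_singleton_le_iff_mem _ _).2 hmem) fun x hx ↦ ?_
  obtain ⟨z, rfl⟩ : g ∣ x := Ideal.mem_span_singleton.1 (hg ▸ hx)
  exact Submodule.mem_span_singleton.2 ⟨_, (mul_eq_lmul_smul_of_mem_Jann_s3 hmem z).symm⟩

end MultiplicationKernel

section Quotient

/-- The quotient map `q : A ⊗[k] A → B` as an `A`-linear map. -/
def qmapLinear : A ⊗[k] A →ₗ[A] Bquot k A :=
  (Ideal.Quotient.mkₐ A (Jann k A)).toLinearMap

theorem qmapLinear_surjective : Function.Surjective (qmapLinear k A) :=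
  Ideal.Quotient.mk_surjective

theorem ker_qmapLinear : (qmapLinear k A).ker = (Jann k A).restrictScalars A :=
  SetLike.ext fun _ ↦ Ideal.Quotient.eq_zero_iff_mem

/-- The map `ψ : ⋀[k]^n A → ⋀[A]^n B` sending `a₁ ∧ ⋯ ∧ aₙ` to `q (1 ⊗ₜ a₁) ∧ ⋯ ∧ q (1 ⊗ₜ aₙ)`. -/
def exteriorPowerToBquot (n : ℕ) :
    ⋀[k]^n A →ₗ[k] RestrictScalars k A (⋀[A]^n (Bquot k A)) where
  toFun w := (RestrictScalars.addEquiv k A _).symm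
    (exteriorPower.map n (qmapLinear k A) (exteriorPowerToBaseChange k A A n w))
  map_add' := by simp
  map_smul' c w := by
    rw [map_smul, ← algebraMap_smul A c, map_smul,
      RestrictScalars.addEquiv_symm_map_algebraMap_smul, RingHom.id_apply]

theorem addEquiv_exteriorPowerToBquot_ιMulti {n : ℕ} (v : Fin n → A) :
    RestrictScalars.addEquiv k A _ (exteriorPowerToBquot k A n (exteriorPower.ιMulti k n v)) =
      exteriorPower.ιMulti A n fun i ↦ (qmap k A (1 ⊗ₜ v i) : Bquot k A) := by
  simp only [exteriorPowerToBquot, LinearMap.coe_mk, AddHom.coe_mk, AddEquiv.apply_symm_apply,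
    exteriorPowerToBaseChange_ιMulti, exteriorPower.map_apply_ιMulti]
  rfl

variable {k A} in
theorem exteriorPowerToBquot_bijective [Module.Finite k A] [Module.Projective k A] {n : ℕ}
    (h : HasConstantRank k A (n + 1)) (hI : (Imul k A).IsPrincipal)
    (hJ : (Jann k A).IsPrincipal) : Function.Bijective (exteriorPowerToBquot k A n) := by
  obtain ⟨g, hg⟩ := hJ
  have hbij := exteriorPower_map_toBaseChange_bijective h
    (surjective_baseChange_apply_of_Jann_eq_span hI hg)
    (surjective_lid_rTensor_of_Jann_eq_span hI hg) (qmapLinear_surjective k A)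
    ((ker_qmapLinear k A).trans (span_singleton_eq_restrictScalars_Jann hg).symm)
  exact (RestrictScalars.addEquiv k A _).symm.bijective.comp hbij

end Quotient

/-- Let `k` be a commutative ring and `A` a commutative `k`-algebra which, as
a `k`-module, is finitely generated projective of constant rank `r ≥ 1`.  Assume the ideals
`I = ker(μ)` and `J = Ann(I)` of `A ⊗[k] A` are principal, and put `B = (A ⊗[k] A)/J`.  Then
the `k`-linear map `ψ : ⋀^{r−1}_k A → ⋀^{r−1}_A B` determined by
`ψ(a_1 ∧ ⋯ ∧ a_{r−1}) = q(1⊗a_1) ∧_A ⋯ ∧_A q(1⊗a_{r−1})` is an isomorphism, where the source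
is the `(r−1)`-st exterior power of `A` as a `k`-module and the target is the `(r−1)`-st
exterior power of `B` as an `A`-module (viewed as a `k`-module by restriction of scalars). -/
theorem stmt3 (r : ℕ) (hr : 1 ≤ r) [Module.Finite k A] [Module.Projective k A]
    (hrank : ∀ (p : Ideal k) [p.IsPrime],
      Nonempty (LocalizedModule p.primeCompl A ≃ₗ[Localization p.primeCompl]
        (Fin r → Localization p.primeCompl)))
    (hI : (Imul k A).IsPrincipal) (hJ : (Jann k A).IsPrincipal) :
    ∃ ψ : ↥(⋀[k]^(r - 1) A) →ₗ[k] RestrictScalars k A ↥(⋀[A]^(r - 1) (Bquot k A)),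
      Function.Bijective ψ ∧
        ∀ (v : Fin (r - 1) → A) (x : ↥(⋀[k]^(r - 1) A)),
          (x : ExteriorAlgebra k A) = ExteriorAlgebra.ιMulti k (r - 1) v →
            ((RestrictScalars.addEquiv k A ↥(⋀[A]^(r - 1) (Bquot k A))) (ψ x)
                : ExteriorAlgebra A (Bquot k A)) =
              ExteriorAlgebra.ιMulti A (r - 1) fun i => qmap k A ((1 : A) ⊗ₜ[k] v i) := by
  obtain ⟨n, rfl⟩ : ∃ n, r = n + 1 := Nat.exists_eq_add_of_le' hr
  refine ⟨exteriorPowerToBquot k A n, exteriorPowerToBquot_bijective hrank hI hJ,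
    fun v x hx ↦ ?_⟩
  obtain rfl : x = exteriorPower.ιMulti k n v := Subtype.ext hx
  exact congrArg Subtype.val (addEquiv_exteriorPowerToBquot_ιMulti k A v)

end
end

section
/- Let R be a commutative ring, M a finite free R-module, and φ an R-linear endomorphism of M. Then φ is injective if and only if det(φ) is a non-zero-divisor in R. -/
theorem mulVec_injective_iff_det_mem_nonZeroDivisors {R n : Type*} [CommRing R] [Fintype n]
    [DecidableEq n] (A : Matrix n n R) :
    Function.Injective A.mulVec ↔ A.det ∈ nonZeroDivisors R := by
  rw [Matrix.mulVec_injective_iff, Matrix.linearIndependent_col_iff,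
    Matrix.nonsingular_iff_det_mem_nonZeroDivisors]

theorem mulVec_toMatrix_injective_iff {R M N m n : Type*} [CommSemiring R] [AddCommMonoid M]
    [Module R M] [AddCommMonoid N] [Module R N] [Finite m] [Fintype n] [DecidableEq n]
    (b : Module.Basis n R M) (c : Module.Basis m R N) (f : M →ₗ[R] N) :
    Function.Injective (LinearMap.toMatrix b c f).mulVec ↔ Function.Injective f := by
  have intertwines : (LinearMap.toMatrix b c f).mulVec ∘ b.equivFun = c.equivFun ∘ f :=
    funext (LinearMap.toMatrix_mulVec_repr b c f)
  rw [← EquivLike.injective_comp b.equivFun, intertwines, EquivLike.comp_injective]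

/-- Let `R` be a commutative ring, `M` a finite free `R`-module, and `φ` an
`R`-linear endomorphism of `M`.  Then `φ` is injective iff `det φ` is a non-zero-divisor of `R`. -/
theorem stmt5 (R : Type*) [CommRing R] (M : Type*) [AddCommGroup M] [Module R M]
    [Module.Free R M] [Module.Finite R M] (φ : M →ₗ[R] M) :
    Function.Injective φ ↔ LinearMap.det φ ∈ nonZeroDivisors R := by
  classical
  let b := Module.Free.chooseBasis R M
  rw [← mulVec_toMatrix_injective_iff b b, mulVec_injective_iff_det_mem_nonZeroDivisors,
    LinearMap.det_toMatrix]
end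

section
/- Let k be a commutative ring, R a commutative k-algebra, and f0, f1 ∈ R non-zero-divisors such that R/(f0), R/(f1) and R/(f0·f1) are all finite free k-modules. Then for every g ∈ R, the determinant of multiplication by the image of g on R/(f0·f1) equals the product of the determinant of multiplication by the image of g on R/(f0) and the determinant of multiplication by the image of g on R/(f1); that is, N_{(R/(f0 f1))/k}(g) = N_{(R/(f0))/k}(g) · N_{(R/(f1))/k}(g). -/
/-!
Multiplication by the non-zero-divisor `a` embeds `R ⧸ I` into `R ⧸ a • I` with cokernel
`R ⧸ (a)`. Both maps are `R`-linear, so multiplication by `g` acts compatibly on the three modules,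
and in a basis adapted to the sequence its matrix on the middle one is block triangular.
-/

theorem det_eq_det_of_comp_eq_comp {k M N : Type*} [CommRing k] [AddCommGroup M] [AddCommGroup N]
    [Module k M] [Module k N] (e : M ≃ₗ[k] N) {f : Module.End k M} {g : Module.End k N}
    (h : e.toLinearMap ∘ₗ f = g ∘ₗ e.toLinearMap) : LinearMap.det f = LinearMap.det g := by
  rw [← LinearMap.det_conj f e, ← LinearMap.comp_assoc, h, LinearMap.comp_assoc, e.comp_symm,
    LinearMap.comp_id]

section Exact

variable {k A V C : Type*} [CommRing k] [AddCommGroup A] [AddCommGroup V] [AddCommGroup C]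
  [Module k A] [Module k V] [Module k C] [Module.Free k A] [Module.Finite k A]
  [Module.Free k C] [Module.Finite k C]

theorem det_eq_det_mul_det_of_exact {i : A →ₗ[k] V} {p : V →ₗ[k] C}
    (hi : Function.Injective i) (hip : Function.Exact i p) (hp : Function.Surjective p)
    {a : Module.End k A} {v : Module.End k V} {c : Module.End k C}
    (hav : i ∘ₗ a = v ∘ₗ i) (hvc : p ∘ₗ v = c ∘ₗ p) :
    LinearMap.det v = LinearMap.det a * LinearMap.det c := by
  let W := LinearMap.range i
  let eA : A ≃ₗ[k] W := LinearEquiv.ofInjective i hi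
  let eC : (V ⧸ W) ≃ₗ[k] C := hip.linearEquivOfSurjective hp
  have : Module.Free k W := .of_equiv eA
  have : Module.Finite k W := .equiv eA
  have : Module.Free k (V ⧸ W) := .of_equiv eC.symm
  have : Module.Finite k (V ⧸ W) := .equiv eC.symm
  have : Module.Finite k V := .of_submodule_quotient W
  have hv : W ≤ W.comap v := by
    rintro _ ⟨x, rfl⟩
    exact ⟨a x, LinearMap.congr_fun hav x⟩
  have det_sub : LinearMap.det a = LinearMap.det (v.restrict hv) :=
    det_eq_det_of_comp_eq_comp eA <| LinearMap.ext fun x ↦ Subtype.ext (LinearMap.congr_fun hav x)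
  have det_quot : LinearMap.det (W.mapQ W v hv) = LinearMap.det c :=
    det_eq_det_of_comp_eq_comp eC <| Submodule.linearMap_qext W hvc
  rw [LinearMap.det_eq_det_mul_det W v hv, det_sub, det_quot]

theorem det_lsmul_eq_det_mul_det_of_exact {R : Type*} [Semiring R] [Algebra k R]
    [Module R A] [Module R V] [Module R C]
    [IsScalarTower k R A] [IsScalarTower k R V] [IsScalarTower k R C]
    {i : A →ₗ[R] V} {p : V →ₗ[R] C}
    (hi : Function.Injective i) (hip : Function.Exact i p) (hp : Function.Surjective p) (g : R) :
    LinearMap.det (Algebra.lsmul k k V g) =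
      LinearMap.det (Algebra.lsmul k k A g) * LinearMap.det (Algebra.lsmul k k C g) :=
  det_eq_det_mul_det_of_exact (i := i.restrictScalars k) (p := p.restrictScalars k) hi hip hp
    (LinearMap.ext fun x ↦ map_smul i g x) (LinearMap.ext fun x ↦ map_smul p g x)

end Exact

theorem mulLeft_algebraMap_eq_lsmul (k : Type*) {R : Type*} (B : Type*) [CommSemiring k]
    [CommSemiring R] [Semiring B] [Algebra k R] [Algebra k B] [Algebra R B] [IsScalarTower k R B]
    (g : R) : LinearMap.mulLeft k (algebraMap R B g) = Algebra.lsmul k k B g :=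
  LinearMap.ext fun x ↦ (Algebra.smul_def g x).symm

section Pointwise

open scoped Pointwise

theorem smul_ideal_span_singleton {R : Type*} [CommSemiring R] (a b : R) :
    a • Ideal.span {b} = Ideal.span {a * b} := by
  rw [← Ideal.submodule_span_eq, Submodule.smul_span, Set.smul_set_singleton, smul_eq_mul,
    Ideal.submodule_span_eq]

theorem stmt7_general {k R : Type*} [CommRing k] [CommRing R] [Algebra k R]
    {a : R} (ha : a ∈ nonZeroDivisors R) (I : Ideal R)
    [Module.Free k (R ⧸ Ideal.span {a})] [Module.Finite k (R ⧸ Ideal.span {a})]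
    [Module.Free k (R ⧸ I)] [Module.Finite k (R ⧸ I)] (g : R) :
    LinearMap.det (LinearMap.mulLeft k (Ideal.Quotient.mk (a • I) g)) =
      LinearMap.det (LinearMap.mulLeft k (Ideal.Quotient.mk (Ideal.span {a}) g)) *
        LinearMap.det (LinearMap.mulLeft k (Ideal.Quotient.mk I g)) := by
  simp only [← Ideal.Quotient.algebraMap_eq, mulLeft_algebraMap_eq_lsmul]
  rw [mul_comm]
  exact det_lsmul_eq_det_mul_det_of_exact (I.mulQuot_injective ha) I.exact_mulQuot_quotOfMul
    I.quotOfMul_surjective g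

end Pointwise

/-- Let `k` be a commutative ring, `R` a commutative `k`-algebra, and
`f0, f1 ∈ R` non-zero-divisors such that `R/(f0)`, `R/(f1)` and `R/(f0·f1)` are all finite free
`k`-modules.  Then for every `g ∈ R`,
`N_{(R/(f0·f1))/k}(g) = N_{(R/(f0))/k}(g) · N_{(R/(f1))/k}(g)`, where the norm is the
determinant of the `k`-linear endomorphism given by multiplication by the image of `g`. -/
theorem stmt7 (k : Type*) [CommRing k] (R : Type*) [CommRing R] [Algebra k R]
    (f0 f1 : R) (h0 : f0 ∈ nonZeroDivisors R) (h1 : f1 ∈ nonZeroDivisors R)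
    [Module.Free k (R ⧸ Ideal.span {f0})] [Module.Finite k (R ⧸ Ideal.span {f0})]
    [Module.Free k (R ⧸ Ideal.span {f1})] [Module.Finite k (R ⧸ Ideal.span {f1})]
    [Module.Free k (R ⧸ Ideal.span {f0 * f1})] [Module.Finite k (R ⧸ Ideal.span {f0 * f1})]
    (g : R) :
    LinearMap.det (LinearMap.mulLeft k (Ideal.Quotient.mk (Ideal.span {f0 * f1}) g)) =
      LinearMap.det (LinearMap.mulLeft k (Ideal.Quotient.mk (Ideal.span {f0}) g)) *
        LinearMap.det (LinearMap.mulLeft k (Ideal.Quotient.mk (Ideal.span {f1}) g)) := by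
  rw [← smul_ideal_span_singleton]
  exact stmt7_general h0 (Ideal.span {f1}) g
end

section
/- Let A be a commutative ring, M a finitely generated A-module, and B a commutative A-algebra that is faithfully flat as an A-module. If B ⊗_A M is a free B-module of rank s, then M is a finitely generated projective A-module of constant rank s, i.e. for every prime ideal p of A the localization M_p is a free A_p-module of rank s. -/
open TensorProduct

/-!
Finite generation descends along a faithfully flat algebra `B`. Applied to the kernel of a
presentation `Aⁿ → M`, which commutes with the flat base change to `B`, this shows that finite
presentation descends too. Flatness also descends, and a finitely presented flat module is
projective. Finally, every prime `p` of `A` is the contraction of a prime `q` of `B`, and the rank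
of `M` at `p` is the rank of `B ⊗[A] M` at `q`.
-/

section Descent

variable {A M : Type*} [CommRing A] [AddCommGroup M] [Module A M]
  (B : Type*) [CommRing B] [Algebra A B] [Module.FaithfullyFlat A B]

theorem finitePresentation_of_finitePresentation_tensorProduct_of_faithfullyFlat
    [Module.FinitePresentation B (B ⊗[A] M)] : Module.FinitePresentation A M := by
  have : Module.Finite A M := .of_finite_tensorProduct_of_faithfullyFlat B
  obtain ⟨n, f, hf⟩ := Module.Finite.exists_fin' A M
  have hker : (LinearMap.ker (AlgebraTensorModule.lTensor B B f)).FG :=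
    Module.FinitePresentation.fg_ker _ (LinearMap.lTensor_surjective B hf)
  have : Module.Finite B (B ⊗[A] LinearMap.ker f) :=
    (Module.Finite.equiv_iff (f.tensorKerEquiv B B)).mpr (Module.Finite.iff_fg.mpr hker)
  have : Module.Finite A (LinearMap.ker f) := .of_finite_tensorProduct_of_faithfullyFlat B
  exact Module.finitePresentation_of_surjective f hf (Module.Finite.iff_fg.mp this)

theorem projective_of_projective_tensorProduct_of_faithfullyFlat
    [Module.Finite B (B ⊗[A] M)] [Module.Projective B (B ⊗[A] M)] : Module.Projective A M := by
  have : Module.FinitePresentation B (B ⊗[A] M) := Module.finitePresentation_of_projective _ _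
  have : Module.FinitePresentation A M :=
    finitePresentation_of_finitePresentation_tensorProduct_of_faithfullyFlat B
  have : Module.Flat A M := .of_flat_tensorProduct A M B
  exact Module.Flat.projective_of_finitePresentation

end Descent

theorem rankAtStalk_eq_of_rankAtStalk_tensorProduct_eq_of_comap_surjective
    {A M B : Type*} [CommRing A] [AddCommGroup M] [Module A M] [Module.Finite A M] [Module.Flat A M]
    [CommRing B] [Algebra A B]
    (hsurj : Function.Surjective (PrimeSpectrum.comap (algebraMap A B))) {n : ℕ}
    (hn : ∀ q : PrimeSpectrum B, Module.rankAtStalk (B ⊗[A] M) q = n) (p : PrimeSpectrum A) :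
    Module.rankAtStalk M p = n := by
  obtain ⟨q, rfl⟩ := hsurj p
  rw [← Module.rankAtStalk_baseChange, hn]

theorem nonempty_localizedModule_linearEquiv_of_rankAtStalk_eq
    {A M : Type*} [CommRing A] [AddCommGroup M] [Module A M] [Module.Finite A M] [Module.Flat A M]
    {n : ℕ} {p : PrimeSpectrum A} (hn : Module.rankAtStalk M p = n) :
    Nonempty (LocalizedModule p.asIdeal.primeCompl M ≃ₗ[Localization p.asIdeal.primeCompl]
      (Fin n → Localization p.asIdeal.primeCompl)) := by
  have : Module.Free (Localization.AtPrime p.asIdeal) (LocalizedModule p.asIdeal.primeCompl M) :=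
    Module.free_of_flat_of_isLocalRing
  exact ⟨(Module.finBasisOfFinrankEq _ _ hn).equivFun⟩

theorem rankAtStalk_eq_of_linearEquiv_fin_fun {R N : Type*} [CommRing R] [AddCommGroup N]
    [Module R N] {n : ℕ} (e : N ≃ₗ[R] (Fin n → R)) (p : PrimeSpectrum R) :
    Module.rankAtStalk N p = n := by
  have : Nontrivial R := p.nontrivial
  simp [Module.rankAtStalk_eq_of_equiv e]

theorem stmt10_general (A : Type*) [CommRing A] (M : Type*) [AddCommGroup M] [Module A M]
    (B : Type*) [CommRing B] [Algebra A B] [Module.FaithfullyFlat A B] (s : ℕ)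
    [Module.Finite B (B ⊗[A] M)] [Module.Projective B (B ⊗[A] M)]
    (hs : ∀ q : PrimeSpectrum B, Module.rankAtStalk (B ⊗[A] M) q = s) :
    Module.Finite A M ∧ Module.Projective A M ∧
      ∀ (p : Ideal A) [p.IsPrime],
        Nonempty (LocalizedModule p.primeCompl M ≃ₗ[Localization p.primeCompl]
          (Fin s → Localization p.primeCompl)) := by
  have hfin : Module.Finite A M := .of_finite_tensorProduct_of_faithfullyFlat B
  have hproj : Module.Projective A M := projective_of_projective_tensorProduct_of_faithfullyFlat B
  refine ⟨hfin, hproj, fun p hp => ?_⟩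
  have hrank : Module.rankAtStalk M ⟨p, hp⟩ = s :=
    rankAtStalk_eq_of_rankAtStalk_tensorProduct_eq_of_comap_surjective
      PrimeSpectrum.comap_surjective_of_faithfullyFlat hs ⟨p, hp⟩
  exact nonempty_localizedModule_linearEquiv_of_rankAtStalk_eq hrank

/-- Let `A` be a commutative ring, `M` a finitely generated `A`-module, and
`B` a commutative `A`-algebra that is faithfully flat as an `A`-module.  If `B ⊗_A M` is a free
`B`-module of rank `s`, then `M` is a finitely generated projective `A`-module of constant rank
`s`: for every prime ideal `p` of `A`, the localization `M_p` is a free `A_p`-module of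
rank `s`. -/
theorem stmt10 (A : Type*) [CommRing A] (M : Type*) [AddCommGroup M] [Module A M]
    [Module.Finite A M] (B : Type*) [CommRing B] [Algebra A B] [Module.FaithfullyFlat A B]
    (s : ℕ) (hfree : Nonempty ((B ⊗[A] M) ≃ₗ[B] (Fin s → B))) :
    Module.Projective A M ∧
      ∀ (p : Ideal A) [p.IsPrime],
        Nonempty (LocalizedModule p.primeCompl M ≃ₗ[Localization p.primeCompl]
          (Fin s → Localization p.primeCompl)) := by
  obtain ⟨e⟩ := hfree
  have : Module.Projective B (B ⊗[A] M) := .of_equiv e.symm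
  exact (stmt10_general A M B s (rankAtStalk_eq_of_linearEquiv_fin_fun e)).2
end

section
/- Let k be a commutative ring, A a commutative k-algebra, and J an ideal of A such that A is J-adically complete and separated (A ≅ lim_m A/J^m). Let M be a finitely generated A-module that is J-adically complete and separated (M ≅ lim_m M/J^m M). Let k' be a commutative k-algebra that is faithfully flat as a k-module, and put A' = k' ⊗_k A and M' = k' ⊗_k M, regarded as a module over A'. If M' is a free A'-module of rank s, then M is a projective A-module of constant rank s (its localization at every prime of A is free of rank s). -/
open TensorProduct

attribute [local instance] Algebra.TensorProduct.rightAlgebra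

/-!
Finite presentation and flatness descend along a faithfully flat ring map `R → S`, and together they
amount to being finitely generated projective. The rank at a prime of `S` agrees with the rank at
its preimage in `R`, and every prime of `R` is such a preimage, so the rank descends too. For the
theorem, apply this to `A → k' ⊗ A`, which is faithfully flat by base change from `k → k'`.
-/

section Descent

variable {R M : Type*} (S : Type*) [CommRing R] [CommRing S] [Algebra R S]
  [Module.FaithfullyFlat R S] [AddCommGroup M] [Module R M]

lemma finitePresentation_of_finitePresentation_tensorProduct_of_faithfullyFlat_s11
    [Module.FinitePresentation S (S ⊗[R] M)] : Module.FinitePresentation R M := by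
  have : Module.Finite R M := .of_finite_tensorProduct_of_faithfullyFlat S
  obtain ⟨n, f, hf⟩ := Module.Finite.exists_fin' R M
  have hker : (AlgebraTensorModule.lTensor S S f).ker.FG :=
    Module.FinitePresentation.fg_ker _ (LinearMap.lTensor_surjective S hf)
  have : Module.Finite S (AlgebraTensorModule.lTensor S S f).ker := .of_fg hker
  have : Module.Finite S (S ⊗[R] f.ker) := .equiv (LinearMap.tensorKerEquiv S S f).symm
  have : Module.Finite R f.ker := .of_finite_tensorProduct_of_faithfullyFlat S
  exact Module.finitePresentation_of_surjective f hf (Module.Finite.iff_fg.mp this)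

lemma projective_of_projective_tensorProduct_of_faithfullyFlat_s11
    [Module.Finite S (S ⊗[R] M)] [Module.Projective S (S ⊗[R] M)] : Module.Projective R M := by
  have : Module.FinitePresentation S (S ⊗[R] M) := Module.finitePresentation_of_projective S _
  have : Module.FinitePresentation R M :=
    finitePresentation_of_finitePresentation_tensorProduct_of_faithfullyFlat_s11 S
  have : Module.Flat R M := .of_flat_tensorProduct R M S
  exact Module.Flat.projective_of_finitePresentation

lemma rankAtStalk_eq_of_rankAtStalk_tensorProduct_eq [Module.Finite R M] [Module.Flat R M] {n : ℕ}
    (h : ∀ q : PrimeSpectrum S, Module.rankAtStalk (S ⊗[R] M) q = n) (p : PrimeSpectrum R) :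
    Module.rankAtStalk M p = n := by
  obtain ⟨q, rfl⟩ := PrimeSpectrum.comap_surjective_of_faithfullyFlat (B := S) p
  rw [← Module.rankAtStalk_baseChange, h]

end Descent

section Rank

variable {R M : Type*} [CommRing R] [AddCommGroup M] [Module R M] {n : ℕ}

lemma rankAtStalk_eq_of_equiv_fin_fun (e : M ≃ₗ[R] (Fin n → R)) (p : PrimeSpectrum R) :
    Module.rankAtStalk M p = n := by
  have : Nontrivial R := p.nontrivial
  simp [Module.rankAtStalk_eq_of_equiv e, Module.rankAtStalk_eq_finrank_of_free]

lemma nonempty_localizedModule_equiv_of_rankAtStalk_eq [Module.Finite R M] [Module.Flat R M]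
    {p : PrimeSpectrum R} (h : Module.rankAtStalk M p = n) :
    Nonempty (LocalizedModule p.asIdeal.primeCompl M ≃ₗ[Localization p.asIdeal.primeCompl]
      (Fin n → Localization p.asIdeal.primeCompl)) := by
  have : Module.Free (Localization p.asIdeal.primeCompl)
      (LocalizedModule p.asIdeal.primeCompl M) :=
    Module.free_of_flat_of_isLocalRing
  exact ⟨(Module.finBasisOfFinrankEq _ _ h).equivFun⟩

end Rank

lemma faithfullyFlat_tensorProduct_right (R A B : Type*) [CommRing R] [CommRing A] [CommRing B]
    [Algebra R A] [Algebra R B] [Module.FaithfullyFlat R A] :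
    Module.FaithfullyFlat B (A ⊗[R] B) :=
  .of_linearEquiv _ _ (Algebra.TensorProduct.commRight R B A).symm.toLinearEquiv

theorem stmt11_general {A M : Type*} (B : Type*) [CommRing A] [CommRing B] [Algebra A B]
    [Module.FaithfullyFlat A B] [AddCommGroup M] [Module A M] {s : ℕ}
    (hfree : Nonempty ((B ⊗[A] M) ≃ₗ[B] (Fin s → B))) :
    Module.Projective A M ∧
      ∀ (p : Ideal A) [p.IsPrime],
        Nonempty (LocalizedModule p.primeCompl M ≃ₗ[Localization p.primeCompl]
          (Fin s → Localization p.primeCompl)) := by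
  obtain ⟨e⟩ := hfree
  have : Module.Finite B (B ⊗[A] M) := .equiv e.symm
  have : Module.Projective B (B ⊗[A] M) := .of_equiv e.symm
  have : Module.Finite A M := .of_finite_tensorProduct_of_faithfullyFlat B
  have hproj : Module.Projective A M := projective_of_projective_tensorProduct_of_faithfullyFlat_s11 B
  have hrank : ∀ p : PrimeSpectrum A, Module.rankAtStalk M p = s :=
    rankAtStalk_eq_of_rankAtStalk_tensorProduct_eq B (rankAtStalk_eq_of_equiv_fin_fun e)
  exact ⟨hproj, fun p hp => nonempty_localizedModule_equiv_of_rankAtStalk_eq (hrank ⟨p, hp⟩)⟩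

/-- Let `k` be a commutative ring, `A` a commutative `k`-algebra, and `J` an
ideal of `A` such that `A` is `J`-adically complete and separated.  Let `M` be a finitely
generated `A`-module that is `J`-adically complete and separated.  Let `k'` be a faithfully
flat commutative `k`-algebra, and put `A' = k' ⊗_k A` and `M' = k' ⊗_k M ≅ A' ⊗_A M`, regarded
as an `A'`-module.  If `M'` is a free `A'`-module of rank `s`, then `M` is a projective
`A`-module of constant rank `s` (its localization at every prime of `A` is free of
rank `s`). -/
theorem stmt11 (k : Type*) [CommRing k] (A : Type*) [CommRing A] [Algebra k A]
    (J : Ideal A) [IsAdicComplete J A]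
    (M : Type*) [AddCommGroup M] [Module A M] [Module.Finite A M] [IsAdicComplete J M]
    (k' : Type*) [CommRing k'] [Algebra k k'] [Module.FaithfullyFlat k k']
    (s : ℕ)
    (hfree : Nonempty (((k' ⊗[k] A) ⊗[A] M) ≃ₗ[k' ⊗[k] A] (Fin s → (k' ⊗[k] A)))) :
    Module.Projective A M ∧
      ∀ (p : Ideal A) [p.IsPrime],
        Nonempty (LocalizedModule p.primeCompl M ≃ₗ[Localization p.primeCompl]
          (Fin s → Localization p.primeCompl)) :=
  have := faithfullyFlat_tensorProduct_right k k' A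
  stmt11_general (k' ⊗[k] A) hfree
end

section
/- Let A → B → C be homomorphisms of commutative rings (so C is a B-algebra and an A-algebra compatibly). Suppose C is a finitely generated projective B-module of constant rank m with m > 0, and also a finitely generated projective A-module of constant rank n·m with n·m > 0. Then B is a finitely generated projective A-module of constant rank n. -/
/-!
Since `C` is finite, projective and of positive rank over `B`, it is faithful, so by Nakayama's
lemma its trace ideal is all of `B`. As `C` is moreover a `B`-algebra, every element of the trace
ideal is the value at `1` of some functional, so some `B`-linear `C → B` sends `1` to `1`. It splits
`B → C`, making `B` a direct summand of the finite projective `A`-module `C`. At a prime of `A` the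
fibre of `B` is Artinian, so the fibre of `C` is free of rank `m` over it and ranks multiply:
cancelling `m` from `rank B * m = n * m` gives the rank of `B`.
-/

open TensorProduct Module

section TraceIdeal

variable (R M : Type*) [CommRing R] [AddCommGroup M] [Module R M]

/-- The trace ideal of an `R`-module `M`: the ideal generated by the values `f x` of the linear
functionals `f : M → R`, encoded as the range of the evaluation pairing `M^* ⊗ M → R`. -/
def traceIdeal : Ideal R :=
  LinearMap.range (contractLeft R M)

variable {R M} in
theorem apply_mem_traceIdeal (f : Dual R M) (x : M) : f x ∈ traceIdeal R M :=
  ⟨f ⊗ₜ x, contractLeft_apply f x⟩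

theorem traceIdeal_smul_top [Projective R M] :
    traceIdeal R M • (⊤ : Submodule R M) = ⊤ := by
  obtain ⟨s, hs⟩ := projective_def.1 ‹Projective R M›
  refine eq_top_iff.2 fun x _ ↦ ?_
  rw [← hs x, Finsupp.linearCombination_apply]
  exact Submodule.sum_mem _ fun y _ ↦ Submodule.smul_mem_smul
    (apply_mem_traceIdeal (Finsupp.lapply y ∘ₗ s) x) Submodule.mem_top

theorem traceIdeal_eq_top [Module.Finite R M] [Projective R M] [FaithfulSMul R M] :
    traceIdeal R M = ⊤ := by
  obtain ⟨a, ha, ha_smul⟩ := Submodule.exists_sub_one_mem_and_smul_eq_zero_of_fg_of_le_smul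
    (traceIdeal R M) ⊤ Module.Finite.fg_top (traceIdeal_smul_top R M).ge
  have ha_zero : a = 0 := FaithfulSMul.eq_of_smul_eq_smul (α := M) fun x ↦ by
    rw [ha_smul x Submodule.mem_top, zero_smul]
  rw [Ideal.eq_top_iff_one]
  simpa [ha_zero] using ha

end TraceIdeal

section UnitalRetraction

theorem exists_apply_one_eq_of_mem_traceIdeal {R S : Type*} [CommRing R] [Ring S] [Algebra R S]
    {a : R} (ha : a ∈ traceIdeal R S) : ∃ f : S →ₗ[R] R, f 1 = a := by
  obtain ⟨t, rfl⟩ := ha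
  induction t with
  | zero => exact ⟨0, by simp⟩
  | tmul f x => exact ⟨f ∘ₗ LinearMap.mulLeft R x, by simp⟩
  | add t u ht hu =>
    obtain ⟨f, hf⟩ := ht
    obtain ⟨g, hg⟩ := hu
    exact ⟨f + g, by simp [hf, hg]⟩

theorem exists_comp_algebraLinearMap_eq_id (R S : Type*) [CommRing R] [Ring S] [Algebra R S]
    [Module.Finite R S] [Projective R S] [FaithfulSMul R S] :
    ∃ r : S →ₗ[R] R, r ∘ₗ Algebra.linearMap R S = LinearMap.id := by
  obtain ⟨r, hr⟩ : ∃ r : S →ₗ[R] R, r 1 = 1 :=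
    exists_apply_one_eq_of_mem_traceIdeal (traceIdeal_eq_top R S ▸ Submodule.mem_top)
  exact ⟨r, LinearMap.ext_ring (by simp [hr])⟩

variable (A B C : Type*) [CommRing A] [CommRing B] [Ring C] [Algebra A B] [Algebra B C]
  [Algebra A C] [IsScalarTower A B C] [Module.Finite B C] [Projective B C] [FaithfulSMul B C]

theorem finite_of_isScalarTower_of_faithfulSMul [Module.Finite A C] : Module.Finite A B := by
  obtain ⟨r, hr⟩ := exists_comp_algebraLinearMap_eq_id B C
  exact .of_surjective (r.restrictScalars A) fun b ↦ ⟨_, LinearMap.congr_fun hr b⟩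

theorem projective_of_isScalarTower_of_faithfulSMul [Projective A C] : Projective A B := by
  obtain ⟨r, hr⟩ := exists_comp_algebraLinearMap_eq_id B C
  exact .of_split ((Algebra.linearMap B C).restrictScalars A) (r.restrictScalars A)
    (LinearMap.ext fun b ↦ LinearMap.congr_fun hr b)

end UnitalRetraction

section Rank

theorem rankAtStalk_eq_iff_nonempty_linearEquiv {R M : Type*} [CommRing R] [AddCommGroup M]
    [Module R M] [Flat R M] [Module.Finite R M] (p : PrimeSpectrum R) (n : ℕ) :
    rankAtStalk M p = n ↔
      Nonempty (LocalizedModule p.asIdeal.primeCompl M ≃ₗ[Localization p.asIdeal.primeCompl]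
        (Fin n → Localization p.asIdeal.primeCompl)) := by
  let Rₚ := Localization.AtPrime p.asIdeal
  let Mₚ := LocalizedModule p.asIdeal.primeCompl M
  constructor
  · intro h
    have : Free Rₚ Mₚ := free_of_flat_of_isLocalRing
    exact ⟨(finBasisOfFinrankEq Rₚ Mₚ h).equivFun⟩
  · rintro ⟨e⟩
    exact (LinearEquiv.finrank_eq (R := Rₚ) e).trans (finrank_fin_fun Rₚ)

theorem nonempty_basis_of_rankAtStalk_eq {R M : Type*} [CommRing R] [Finite (MaximalSpectrum R)]
    [AddCommGroup M] [Module R M] [Flat R M] [Module.Finite R M] {n : ℕ}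
    (h : ∀ P : MaximalSpectrum R, rankAtStalk M P.toPrimeSpectrum = n) :
    Nonempty (Basis (Fin n) R M) := by
  refine nonempty_basis_of_flat_of_finrank_eq R M n fun P ↦ ?_
  let := Ideal.Quotient.field P.asIdeal
  have hP : (⊥ : PrimeSpectrum (R ⧸ P.asIdeal)).comap (algebraMap R (R ⧸ P.asIdeal)) =
      P.toPrimeSpectrum :=
    PrimeSpectrum.ext Ideal.mk_ker
  calc finrank (R ⧸ P.asIdeal) ((R ⧸ P.asIdeal) ⊗[R] M)
      = rankAtStalk ((R ⧸ P.asIdeal) ⊗[R] M) (⊥ : PrimeSpectrum (R ⧸ P.asIdeal)) := by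
        rw [rankAtStalk_eq_finrank_of_free, Pi.natCast_apply, Nat.cast_id]
    _ = n := by rw [rankAtStalk_baseChange, hP, h P]

variable {A B : Type*} [CommRing A] [CommRing B] [Algebra A B]

attribute [local instance] Algebra.TensorProduct.rightAlgebra

theorem comap_comap_algebraMap_fiber_eq (p : PrimeSpectrum A)
    (Q : PrimeSpectrum (p.asIdeal.Fiber B)) :
    (Q.comap (algebraMap B (p.asIdeal.Fiber B))).comap (algebraMap A B) = p := by
  let k := p.asIdeal.ResidueField
  have hk : Q.comap (algebraMap k (p.asIdeal.Fiber B)) = ⊥ := Subsingleton.elim _ _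
  rw [← PrimeSpectrum.comap_comp_apply, ← IsScalarTower.algebraMap_eq,
    IsScalarTower.algebraMap_eq A k, PrimeSpectrum.comap_comp_apply, hk]
  exact PrimeSpectrum.ext p.asIdeal.ker_algebraMap_residueField

variable {M : Type*} [AddCommGroup M] [Module A M] [Module B M] [IsScalarTower A B M]

theorem rankAtStalk_eq_rankAtStalk_mul [Module.Finite A B] [Flat A B] [Module.Finite B M]
    [Flat B M] {m : ℕ} (p : PrimeSpectrum A)
    (h : ∀ q : PrimeSpectrum B, q.comap (algebraMap A B) = p → rankAtStalk M q = m) :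
    rankAtStalk M p = rankAtStalk B p * m := by
  have : Module.Finite A M := .trans B M
  have : Flat A M := .trans A B M
  let k := p.asIdeal.ResidueField
  let D := p.asIdeal.Fiber B
  have : IsArtinianRing D := .of_finite k D
  obtain ⟨b⟩ : Nonempty (Basis (Fin m) D (D ⊗[B] M)) :=
    nonempty_basis_of_rankAtStalk_eq fun P ↦ by
      rw [rankAtStalk_baseChange, h _ (comap_comap_algebraMap_fiber_eq p _)]
  have e : (D ⊗[B] M) ≃ₗ[k] (k ⊗[A] M) := Algebra.IsPushout.cancelBaseChange A k B D M
  calc rankAtStalk M p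
      = finrank k (k ⊗[A] M) := rankAtStalk_eq p
    _ = finrank k (Fin m → D) := by
        rw [← e.finrank_eq, (b.equivFun.restrictScalars k).finrank_eq]
    _ = finrank k D * m := by simp [finrank_pi_fintype, mul_comm]
    _ = rankAtStalk B p * m := by rw [rankAtStalk_eq p]

end Rank

/-- Let `A → B → C` be homomorphisms of commutative rings.  Suppose `C` is a
finitely generated projective `B`-module of constant rank `m > 0`, and also a finitely
generated projective `A`-module of constant rank `n·m > 0`.  Then `B` is a finitely generated
projective `A`-module of constant rank `n`. -/
theorem stmt12 (A B C : Type*) [CommRing A] [CommRing B] [CommRing C]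
    [Algebra A B] [Algebra B C] [Algebra A C] [IsScalarTower A B C]
    (n m : ℕ) (hm : 0 < m) (hnm : 0 < n * m)
    [Module.Finite B C] [Module.Projective B C]
    (hrkB : ∀ (q : Ideal B) [q.IsPrime],
      Nonempty (LocalizedModule q.primeCompl C ≃ₗ[Localization q.primeCompl]
        (Fin m → Localization q.primeCompl)))
    [Module.Finite A C] [Module.Projective A C]
    (hrkA : ∀ (p : Ideal A) [p.IsPrime],
      Nonempty (LocalizedModule p.primeCompl C ≃ₗ[Localization p.primeCompl]
        (Fin (n * m) → Localization p.primeCompl))) :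
    Module.Finite A B ∧ Module.Projective A B ∧
      ∀ (p : Ideal A) [p.IsPrime],
        Nonempty (LocalizedModule p.primeCompl B ≃ₗ[Localization p.primeCompl]
          (Fin n → Localization p.primeCompl)) := by
  have hB (q : PrimeSpectrum B) : rankAtStalk C q = m :=
    (rankAtStalk_eq_iff_nonempty_linearEquiv q m).2 (hrkB q.asIdeal)
  have : FaithfulSMul B C := (faithfulSMul_iff_algebraMap_injective B C).2 <|
    rankAtStalk_pos_iff_algebraMap_injective.1 fun q ↦ hm.trans_eq (hB q).symm
  have hfin : Module.Finite A B := finite_of_isScalarTower_of_faithfulSMul A B C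
  have hproj : Projective A B := projective_of_isScalarTower_of_faithfulSMul A B C
  refine ⟨hfin, hproj, fun p hp ↦ (rankAtStalk_eq_iff_nonempty_linearEquiv ⟨p, hp⟩ n).1 ?_⟩
  have hA : rankAtStalk C (⟨p, hp⟩ : PrimeSpectrum A) = n * m :=
    (rankAtStalk_eq_iff_nonempty_linearEquiv _ _).2 (hrkA p)
  rw [rankAtStalk_eq_rankAtStalk_mul ⟨p, hp⟩ fun q _ ↦ hB q] at hA
  exact Nat.eq_of_mul_eq_mul_right hm hA
end

section
/- Let A be a commutative ring with an action of a finite group G by ring automorphisms, and let J be a G-stable ideal of A (g·J = J for all g ∈ G). Write J^G = {a ∈ J : g·a = a for all g ∈ G} and let A·J^G denote the ideal of A generated by J^G. Then: (i) for every a ∈ J one has a^{|G|} ∈ A·J^G; (ii) if J is finitely generated, then there exists s ≥ 1 with J^s ⊆ A·J^G. -/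
/-!
Suppose `a ∈ J` has a finite orbit. Then `a` is a root of the monic polynomial `∏ (X - b)`, with
`b` running over the orbit. `G` permutes the factors, so the coefficients are invariant; each factor
is `X` modulo `J`, so the non-leading coefficients lie in `J`. Hence the polynomial is weakly
Eisenstein at `A·J^G`, which therefore contains `a ^ d` for `d` the size of the orbit. If all orbits
in `J` are finite, `J` thus lies in the radical of `A·J^G`, and when `J` is finitely generated some
power of it lies in `A·J^G`.
-/

open MulAction Polynomial

theorem isWeaklyEisensteinAt_X_sub_C {A : Type*} [CommRing A] {J : Ideal A} {a : A} (ha : a ∈ J) :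
    (X - C a).IsWeaklyEisensteinAt J where
  mem {n} hn := by
    obtain rfl : n = 0 := Nat.lt_one_iff.mp (hn.trans_le (natDegree_X_sub_C_le a))
    simpa using ha

theorem isWeaklyEisensteinAt_prod {A ι : Type*} [CommSemiring A] {J : Ideal A} {s : Finset ι}
    {f : ι → A[X]} (hf : ∀ i ∈ s, (f i).IsWeaklyEisensteinAt J) :
    (∏ i ∈ s, f i).IsWeaklyEisensteinAt J :=
  Finset.prod_induction f (·.IsWeaklyEisensteinAt J) (fun _ _ => .mul)
    ⟨fun hn => by simp at hn⟩ hf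

/-- The ideal `A·J^G` generated by the `G`-invariant elements of `J`. -/
def invariantSpan (G : Type*) {A : Type*} [Semiring A] [SMul G A] (J : Ideal A) : Ideal A :=
  Ideal.span {x : A | x ∈ J ∧ ∀ g : G, g • x = x}

/-- The product of `X - b` over the distinct conjugates `b` of `a`. Unlike
`MulSemiringAction.charpoly` and `prodXSubSMul`, it only needs the orbit of `a` to be finite. -/
noncomputable def orbitPolynomial (G : Type*) {A : Type*} [Group G] [CommRing A]
    [MulSemiringAction G A] (a : A) [Fintype (orbit G a)] : A[X] :=
  ∏ b : orbit G a, (X - C (b : A))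

section OrbitPolynomial

variable {G A : Type*} [Group G] [CommRing A] [MulSemiringAction G A]

section

variable (G) (a : A) [Fintype (orbit G a)]

theorem orbitPolynomial_monic : (orbitPolynomial G a).Monic :=
  monic_prod_X_sub_C _ _

theorem orbitPolynomial_isRoot : (orbitPolynomial G a).IsRoot a := by
  rw [IsRoot, orbitPolynomial, eval_prod]
  exact Finset.prod_eq_zero (Finset.mem_univ ⟨a, mem_orbit_self a⟩) (by simp)

theorem natDegree_orbitPolynomial_le :
    (orbitPolynomial G a).natDegree ≤ Fintype.card (orbit G a) := by
  refine (natDegree_prod_le _ _).trans ?_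
  simpa using Finset.sum_le_card_nsmul Finset.univ _ 1
    fun (b : orbit G a) _ => natDegree_X_sub_C_le (b : A)

variable {G}

theorem smul_orbitPolynomial (g : G) : g • orbitPolynomial G a = orbitPolynomial G a := by
  simp only [orbitPolynomial, Finset.smul_prod', smul_sub, smul_X, smul_C]
  exact Fintype.prod_equiv (toPerm g) _ _ fun _ => rfl

end

theorem orbitPolynomial_isWeaklyEisensteinAt {J : Ideal A} {a : A} [Fintype (orbit G a)]
    (ha : orbit G a ⊆ J) : (orbitPolynomial G a).IsWeaklyEisensteinAt (invariantSpan G J) where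
  mem {n} hn := by
    have hJ : (orbitPolynomial G a).IsWeaklyEisensteinAt J :=
      isWeaklyEisensteinAt_prod fun b _ => isWeaklyEisensteinAt_X_sub_C (ha b.2)
    have hG (g : G) : g • (orbitPolynomial G a).coeff n = (orbitPolynomial G a).coeff n := by
      rw [← coeff_smul, smul_orbitPolynomial]
    exact Ideal.subset_span ⟨hJ.mem hn, hG⟩

theorem pow_card_orbit_mem_invariantSpan {J : Ideal A} {a : A} [Finite (orbit G a)]
    (ha : orbit G a ⊆ J) : a ^ Nat.card (orbit G a) ∈ invariantSpan G J := by
  have := Fintype.ofFinite (orbit G a)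
  rw [Nat.card_eq_fintype_card]
  exact (orbitPolynomial_isWeaklyEisensteinAt ha).pow_natDegree_le_of_root_of_monic_mem
    (orbitPolynomial_isRoot G a) (orbitPolynomial_monic G a) _ (natDegree_orbitPolynomial_le G a)

end OrbitPolynomial

theorem stmt13_general {A G : Type*} [CommRing A] [Group G] [MulSemiringAction G A] {J : Ideal A}
    (hJ : ∀ g : G, ∀ a ∈ J, g • a ∈ J) (hfin : ∀ a ∈ J, Finite (orbit G a)) :
    (∀ a ∈ J, a ^ Nat.card (orbit G a) ∈ invariantSpan G J) ∧
      (J.FG → ∃ s : ℕ, 1 ≤ s ∧ J ^ s ≤ invariantSpan G J) := by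
  have pow_mem_span (a : A) (ha : a ∈ J) : a ^ Nat.card (orbit G a) ∈ invariantSpan G J :=
    have := hfin a ha
    pow_card_orbit_mem_invariantSpan (Set.range_subset_iff.mpr (hJ · a ha))
  refine ⟨pow_mem_span, fun hfg => ?_⟩
  have le_radical : J ≤ (invariantSpan G J).radical := fun a ha => ⟨_, pow_mem_span a ha⟩
  obtain ⟨k, hk⟩ := Ideal.exists_pow_le_of_le_radical_of_fg le_radical hfg
  exact ⟨k + 1, k.succ_pos, (Ideal.pow_le_pow_right k.le_succ).trans hk⟩

/-- Let `A` be a commutative ring with an action of a finite group `G` by ring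
automorphisms, and let `J` be a `G`-stable ideal of `A`.  Write `J^G` for the set of `G`-fixed
elements of `J` and `A·J^G` for the ideal of `A` it generates.  Then:
(i) for every `a ∈ J` one has `a^{|G|} ∈ A·J^G`;
(ii) if `J` is finitely generated, then there exists `s ≥ 1` with `J^s ⊆ A·J^G`. -/
theorem stmt13 (A : Type*) [CommRing A] (G : Type*) [Group G] [Finite G]
    [MulSemiringAction G A] (J : Ideal A) (hJ : ∀ g : G, ∀ a ∈ J, g • a ∈ J) :
    (∀ a ∈ J, a ^ Nat.card G ∈ Ideal.span {x : A | x ∈ J ∧ ∀ g : G, g • x = x}) ∧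
      (J.FG → ∃ s : ℕ, 1 ≤ s ∧
        J ^ s ≤ Ideal.span {x : A | x ∈ J ∧ ∀ g : G, g • x = x}) :=
  (stmt13_general hJ fun a _ => Set.finite_range (· • a)).imp_left fun pow_mem_span a ha =>
    Ideal.pow_mem_of_pow_mem _ (pow_mem_span a ha) (Finite.card_range_le (· • a))
end

section
/- Let q ∈ k[x] be monic of degree n ≥ 1 and let p ∈ k[x] be arbitrary. Write the remainder of p upon division by q as ∑_{i<n} b_i x^i. Then q(t^{-1}) is a unit of k((t)) and the coefficient of t^1 in p(t^{-1}) · q(t^{-1})^{-1} equals b_{n−1}; that is, res((p/q) dx) = b_{n−1}. -/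
/-!
Substituting `x = t⁻¹` in a polynomial of degree at most `N` gives `t ^ (-N)` times the power
series obtained by reversing its coefficients, whose constant term is the coefficient of `x ^ N`.
So when the leading coefficient of `q` is a unit and `deg r < deg q`, the quotient `r / q` expands
as `t` times a power series `w`, and comparing the coefficients of lowest order in
`r = (r / q) * q` determines the constant term of `w`, which is the residue of `r / q`.
In `p / q = (p %ₘ q) / q + p /ₘ q` the last term is a polynomial in `t⁻¹` and does not contribute
to the coefficient of `t`.
-/

open Polynomial

section CommSemiring

variable {k : Type*} [CommSemiring k]

/-- The expansion at infinity of a polynomial, as a Laurent series in the local parameter `t = x⁻¹`: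
the `k`-algebra map `k[x] → k((t))` sending `x` to `t⁻¹`. -/
noncomputable def expandAtInfinity : k[X] →ₐ[k] LaurentSeries k :=
  aeval (HahnSeries.single (-1 : ℤ) (1 : k))

lemma aeval_single_one_one_eq_ofPowerSeries (f : k[X]) :
    aeval (HahnSeries.single (1 : ℤ) (1 : k) : LaurentSeries k) f =
      HahnSeries.ofPowerSeries ℤ k (f : PowerSeries k) := by
  have h : (aeval (HahnSeries.single (1 : ℤ) (1 : k) : LaurentSeries k)).toRingHom =
      (HahnSeries.ofPowerSeries ℤ k).comp coeToPowerSeries.ringHom :=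
    Polynomial.ringHom_ext (by simp [HahnSeries.algebraMap_apply']) (by simp)
  exact DFunLike.congr_fun h f

lemma expandAtInfinity_eq_single_mul_reflect {f : k[X]} {N : ℕ} (hf : f.natDegree ≤ N) :
    expandAtInfinity f = HahnSeries.single (-N : ℤ) (1 : k) *
      HahnSeries.ofPowerSeries ℤ k (f.reflect N : PowerSeries k) := by
  let _ : Invertible (HahnSeries.single (-1 : ℤ) (1 : k) : LaurentSeries k) :=
    ⟨HahnSeries.single 1 1, by simp, by simp⟩
  calc
    expandAtInfinity f = aeval (HahnSeries.single (1 : ℤ) (1 : k) : LaurentSeries k) (f.reflect N) *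
        HahnSeries.single (-1 : ℤ) (1 : k) ^ N :=
      (eval₂_reflect_mul_pow (algebraMap k (LaurentSeries k)) _ N f hf).symm
    _ = _ := by
      simp [aeval_single_one_one_eq_ofPowerSeries, HahnSeries.single_pow, mul_comm]

lemma expandAtInfinity_monomial (n : ℕ) (a : k) :
    expandAtInfinity (monomial n a) = HahnSeries.single (-n : ℤ) a := by
  simp [expandAtInfinity, aeval_monomial, HahnSeries.single_pow, HahnSeries.algebraMap_apply']

lemma coeff_expandAtInfinity_of_pos (f : k[X]) {m : ℤ} (hm : 0 < m) :
    (expandAtInfinity f).coeff m = 0 := by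
  induction f using Polynomial.induction_on' with
  | add f g hf hg => simp [hf, hg]
  | monomial n a =>
    rw [expandAtInfinity_monomial]
    exact HahnSeries.coeff_single_of_ne (by lia)

lemma constantCoeff_coe_reflect (f : k[X]) (N : ℕ) :
    PowerSeries.constantCoeff (f.reflect N : PowerSeries k) = f.coeff N := by
  simp [coeff_reflect, revAt_le]

lemma coeff_single_one_mul_ofPowerSeries (m : ℤ) (F : PowerSeries k) :
    (HahnSeries.single m (1 : k) * HahnSeries.ofPowerSeries ℤ k F).coeff m =
      PowerSeries.constantCoeff F :=
  calc
    _ = 1 * (HahnSeries.ofPowerSeries ℤ k F).coeff 0 := by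
      simpa only [zero_add] using HahnSeries.coeff_single_mul_add (a := (0 : ℤ)) (b := m)
    _ = PowerSeries.constantCoeff F := by
      simpa using HahnSeries.ofPowerSeries_apply_coeff (Γ := ℤ) F 0

end CommSemiring

section CommRing

variable {k : Type*} [CommRing k] {q : k[X]}

lemma isUnit_coe_reflect_natDegree (hq : IsUnit q.leadingCoeff) :
    IsUnit (q.reflect q.natDegree : PowerSeries k) := by
  rwa [PowerSeries.isUnit_iff_constantCoeff, constantCoeff_coe_reflect]

lemma isUnit_expandAtInfinity (hq : IsUnit q.leadingCoeff) : IsUnit (expandAtInfinity q) := by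
  rw [expandAtInfinity_eq_single_mul_reflect le_rfl]
  refine IsUnit.mul ?_ ((isUnit_coe_reflect_natDegree hq).map _)
  exact .of_mul_eq_one (HahnSeries.single (q.natDegree : ℤ) 1) (by simp)

lemma coeff_one_expandAtInfinity_mul_inverse_mul_leadingCoeff {r : k[X]}
    (hq : IsUnit q.leadingCoeff) (hr : r.natDegree < q.natDegree) :
    (expandAtInfinity r * Ring.inverse (expandAtInfinity q)).coeff 1 * q.leadingCoeff =
      r.coeff (q.natDegree - 1) := by
  obtain ⟨w, hw⟩ : (q.reflect q.natDegree : PowerSeries k) ∣ r.reflect (q.natDegree - 1) :=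
    (isUnit_coe_reflect_natDegree hq).dvd
  have quotient_eq : expandAtInfinity r * Ring.inverse (expandAtInfinity q) =
      HahnSeries.single (1 : ℤ) (1 : k) * HahnSeries.ofPowerSeries ℤ k w := by
    refine ((Ring.eq_mul_inverse_iff_mul_eq _ _ _ (isUnit_expandAtInfinity hq)).2 ?_).symm
    have exponent_eq : (1 : ℤ) + -q.natDegree = -(q.natDegree - 1 : ℕ) := by lia
    rw [expandAtInfinity_eq_single_mul_reflect (Nat.le_sub_one_of_lt hr), hw,
      expandAtInfinity_eq_single_mul_reflect le_rfl, mul_mul_mul_comm,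
      HahnSeries.single_mul_single, exponent_eq, mul_one, map_mul,
      mul_comm (HahnSeries.ofPowerSeries ℤ k w)]
  calc
    _ = PowerSeries.constantCoeff w * q.leadingCoeff := by
      rw [quotient_eq, coeff_single_one_mul_ofPowerSeries]
    _ = PowerSeries.constantCoeff (r.reflect (q.natDegree - 1) : PowerSeries k) := by
      rw [hw, map_mul, constantCoeff_coe_reflect, mul_comm, leadingCoeff]
    _ = r.coeff (q.natDegree - 1) := constantCoeff_coe_reflect _ _

lemma expandAtInfinity_mul_inverse_eq_modByMonic_add_divByMonic
    (hq : IsUnit (expandAtInfinity q)) (p : k[X]) :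
    expandAtInfinity p * Ring.inverse (expandAtInfinity q) =
      expandAtInfinity (p %ₘ q) * Ring.inverse (expandAtInfinity q) +
        expandAtInfinity (p /ₘ q) := by
  conv_lhs => rw [← modByMonic_add_div p q, map_add, map_mul, add_mul,
    mul_comm (expandAtInfinity q), Ring.mul_inverse_cancel_right _ _ hq]

end CommRing

/-- Let `q ∈ k[x]` be monic of degree `n ≥ 1` and let `p ∈ k[x]` be
arbitrary.  Write the remainder of `p` upon division by `q` as `∑_{i<n} b_i x^i`.  Then
`q(t⁻¹)` is a unit of the Laurent series ring `k((t))` and the coefficient of `t^1` in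
`p(t⁻¹)·q(t⁻¹)⁻¹` equals `b_{n−1}`; that is, `res((p/q) dx) = b_{n−1}`. -/
theorem stmt15 (k : Type*) [CommRing k] (q p : Polynomial k)
    (hq : q.Monic) (hn : 1 ≤ q.natDegree) :
    IsUnit (Polynomial.aeval (HahnSeries.single (-1 : ℤ) (1 : k) : LaurentSeries k) q) ∧
      ((Polynomial.aeval (HahnSeries.single (-1 : ℤ) (1 : k) : LaurentSeries k) p) *
          Ring.inverse
            (Polynomial.aeval (HahnSeries.single (-1 : ℤ) (1 : k) : LaurentSeries k) q)).coeff
          (1 : ℤ) =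
        (p %ₘ q).coeff (q.natDegree - 1) := by
  have hunit : IsUnit (expandAtInfinity q) :=
    isUnit_expandAtInfinity (hq.leadingCoeff ▸ isUnit_one)
  have hq_ne_one : q ≠ 1 := by
    rintro rfl
    simp at hn
  refine ⟨hunit, ?_⟩
  change (expandAtInfinity p * Ring.inverse (expandAtInfinity q)).coeff 1 = _
  rw [expandAtInfinity_mul_inverse_eq_modByMonic_add_divByMonic hunit, HahnSeries.coeff_add,
    coeff_expandAtInfinity_of_pos _ one_pos, add_zero]
  simpa only [hq.leadingCoeff, mul_one] using
    coeff_one_expandAtInfinity_mul_inverse_mul_leadingCoeff (hq.leadingCoeff ▸ isUnit_one)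
      (natDegree_modByMonic_lt p hq hq_ne_one)
end
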